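/- arXiv:2310.14742 — 2 statements merged into one kernel-verified Lean document; each statement's English description precedes it below -/
import Mathlib

section
/- Let d ≥ 3 and let D ⊂ ℝ^d be a bounded domain with C² boundary and connected boundary, with ε ∈ (0,1) as in the tangential comparison lemma, N := closure(N_ε(∂D)) ∩ D, and c > 0 a constant. Define the Finsler metric F(x,v) = ‖v_N‖/(2δ_D(x)) + ‖v_T‖/δ_D(x)^{1/2} for x ∈ N, and F(x,v) = c‖v‖ for x ∈ D∖N, and let d_F be the associated intrinsic distance (infimum of ∫₀¹ F(γ(t),γ̇(t))dt over piecewise C¹ curves in D joining the two points). Then there exists B ≥ 0 such that for all x, y ∈ D: d_H(x,y) − B ≤ d_F(x,y) ≤ d_H(x,y) + B. -/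
/-!
Both inequalities go through the comparison of `H` with the Euclidean distance: the boundary is
compact, connected and locally a bi-Lipschitz image of a piece of a hyperplane (the level sets of a
`C²` defining function are straightened by the inverse function theorem), so two of its points at
distance `r` are joined inside it by a curve of length at most `C * r` (`exists_conn_frontier`).
Since also `‖x - π x‖ = h(x)²` is at most a constant times `h(x)`, the quantity
`H(π x, π y) + max (h x) (h y)` is comparable with `‖x - y‖ + max (h x) (h y)` and with
`‖π x - π y‖ + max (h x) (h y)`.

*Lower bound* (`exists_lower_bound`). For a base point `z`, the potential
`Φ = 2 log (‖γ - z‖ / K + w(δ)) - log w(δ)` changes along a curve `γ` by at most its `F`-length, where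
`δ` is the boundary distance truncated at `ε`. Here
`w(δ) = √δ exp (-√δ / 2)` is a height comparable with `√δ` whose logarithm varies a little more
slowly than `log √δ`; the slack pays for the change of `‖γ - z‖` caused by the normal component of
the velocity, and a large `K` pays for the tangential component. The derivative of the distance
function along the curve is the normal component, because `‖γ - π (γ t)‖` lies above `δ(γ)` and
touches it at time `t`. Comparing the end points of `γ`, with `z` one of them, gives
`2 log (κ (‖x - y‖ + max)) - log h(x) - log h(y)` as a lower bound.

*Upper bound* (`Collar.exists_upper_bound`). By compactness there are interior tangent balls of a
uniform radius (`exists_interior_ball`), so pushing the boundary inwards along the normals stays in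
`D` with known distance to the boundary and known projection. One climbs from `x` along its normal to
the height `h = max (h x) (h y) ‖π x - π y‖`, moves parallel to the boundary at bounded
cost, and descends to `y`. The points far from the boundary form a compact set, inside which
the cost of joining two points is bounded (`exists_conn_bound`).
-/

open scoped RealInnerProductSpace ENNReal
open Metric Set Filter

noncomputable section

/-- Euclidean space `ℝ^d`. -/
abbrev Euc (d : ℕ) := EuclideanSpace ℝ (Fin d)

/-- The open unit disk in `ℝ²`. -/
def unitDisk : Set (Euc 2) := Metric.ball 0 1

/-- Partial derivative of `f` at `z` in the `i`-th coordinate direction. -/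
def pd {d : ℕ} (i : Fin 2) (f : Euc 2 → Euc d) (z : Euc 2) : Euc d :=
  fderiv ℝ f z (EuclideanSpace.single i 1)

/-- `f` is a conformal harmonic map on the unit disk: it is `C²`, its (vector)
Laplacian vanishes (equivalently, every component is harmonic), and at each point
its two partial derivatives are orthogonal and of equal norm. -/
def ConformalHarmonicOnDisk {d : ℕ} (f : Euc 2 → Euc d) : Prop :=
  ContDiffOn ℝ 2 f unitDisk ∧
  (∀ z ∈ unitDisk,
    fderiv ℝ (pd 0 f) z (EuclideanSpace.single 0 1)
      + fderiv ℝ (pd 1 f) z (EuclideanSpace.single 1 1) = 0) ∧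
  (∀ z ∈ unitDisk, ‖pd 0 f z‖ = ‖pd 1 f z‖ ∧ ⟪pd 0 f z, pd 1 f z⟫ = 0)

/-- The minimal (Forstnerič–Kalaj) metric of a domain `D ⊆ ℝ^d`:
`g_D(x,v) = inf {1/r : r > 0, f ∈ CH(𝔻, D), f 0 = x, f_x 0 = r • v}`. -/
def minMetric {d : ℕ} (D : Set (Euc d)) (x v : Euc d) : ℝ :=
  sInf {c : ℝ | ∃ r : ℝ, 0 < r ∧ c = 1 / r ∧
    ∃ f : Euc 2 → Euc d, ConformalHarmonicOnDisk f ∧ (∀ z ∈ unitDisk, f z ∈ D) ∧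
      f 0 = x ∧ pd 0 f 0 = r • v}

/-- `γ` is a piecewise `C¹` curve on `[a, b]`. -/
def PiecewiseC1On {d : ℕ} (γ : ℝ → Euc d) (a b : ℝ) : Prop :=
  ContinuousOn γ (Set.Icc a b) ∧
  ∃ (n : ℕ) (t : Fin (n + 2) → ℝ), Monotone t ∧ t 0 = a ∧ t (Fin.last (n + 1)) = b ∧
    ∀ i : Fin (n + 1), ContDiffOn ℝ 1 γ (Set.Icc (t i.castSucc) (t i.succ))

/-- The minimal pseudodistance `ρ_D`: infimum of minimal lengths of piecewise `C¹`
curves in `D` joining `x` to `y`. -/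
def minDist {d : ℕ} (D : Set (Euc d)) (x y : Euc d) : ℝ :=
  sInf {L : ℝ | ∃ γ : ℝ → Euc d, PiecewiseC1On γ 0 1 ∧
    (∀ t ∈ Set.Icc (0:ℝ) 1, γ t ∈ D) ∧ γ 0 = x ∧ γ 1 = y ∧
    L = ∫ t in (0:ℝ)..(1:ℝ), minMetric D (γ t) (deriv γ t)}

/-- The Gromov product `(x|y)_o` with respect to the minimal pseudodistance of `D`. -/
def gromovProd {d : ℕ} (D : Set (Euc d)) (o x y : Euc d) : ℝ :=
  (minDist D x o + minDist D y o - minDist D x y) / 2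

/-- `D` is hyperbolic: the minimal pseudodistance is a genuine distance. -/
def MinHyperbolic {d : ℕ} (D : Set (Euc d)) : Prop :=
  ∀ x ∈ D, ∀ y ∈ D, x ≠ y → 0 < minDist D x y

/-- The Hessian quadratic form of `u` at `x` in direction `v`. -/
def hessQ {d : ℕ} (u : Euc d → ℝ) (x v : Euc d) : ℝ :=
  fderiv ℝ (fun y => fderiv ℝ u y v) x v

/-- `D` is a bounded domain with `C²` boundary, described by a `C²` defining
function `u` on a neighborhood `U` of `∂D` with nonvanishing differential. -/
def IsC2BoundedDomain {d : ℕ} (D : Set (Euc d)) : Prop :=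
  IsOpen D ∧ IsConnected D ∧ Bornology.IsBounded D ∧
  ∃ (U : Set (Euc d)) (u : Euc d → ℝ), IsOpen U ∧ frontier D ⊆ U ∧ ContDiffOn ℝ 2 u U ∧
    D ∩ U = {x | x ∈ U ∧ u x < 0} ∧ frontier D = {x | x ∈ U ∧ u x = 0} ∧
    ∀ x ∈ frontier D, fderiv ℝ u x ≠ 0

/-- `D` is a bounded strongly minimally convex domain: it has a `C²` defining function
which is strongly minimally plurisubharmonic near `∂D`, i.e. the trace of its Hessian
on every 2-plane (spanned by an orthonormal pair `v, w`) is strictly positive. -/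
def IsStronglyMinimallyConvex {d : ℕ} (D : Set (Euc d)) : Prop :=
  IsOpen D ∧ IsConnected D ∧ Bornology.IsBounded D ∧
  ∃ (U : Set (Euc d)) (u : Euc d → ℝ), IsOpen U ∧ frontier D ⊆ U ∧ ContDiffOn ℝ 2 u U ∧
    D ∩ U = {x | x ∈ U ∧ u x < 0} ∧ frontier D = {x | x ∈ U ∧ u x = 0} ∧
    (∀ x ∈ frontier D, fderiv ℝ u x ≠ 0) ∧
    (∀ x ∈ U, ∀ v w : Euc d, ‖v‖ = 1 → ‖w‖ = 1 → ⟪v, w⟫ = 0 →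
      0 < hessQ u x v + hessQ u x w)

/-- `D` is a bounded strongly convex domain: convex, with a `C²` defining function whose
Hessian is positive definite on the tangent space at every boundary point
(equivalently, all principal curvatures of `∂D` w.r.t. the inner normal are positive). -/
def IsStronglyConvexDomain {d : ℕ} (D : Set (Euc d)) : Prop :=
  IsOpen D ∧ IsConnected D ∧ Bornology.IsBounded D ∧ Convex ℝ D ∧
  ∃ (U : Set (Euc d)) (u : Euc d → ℝ), IsOpen U ∧ frontier D ⊆ U ∧ ContDiffOn ℝ 2 u U ∧
    D ∩ U = {x | x ∈ U ∧ u x < 0} ∧ frontier D = {x | x ∈ U ∧ u x = 0} ∧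
    (∀ x ∈ frontier D, fderiv ℝ u x ≠ 0) ∧
    (∀ ξ ∈ frontier D, ∀ w : Euc d, w ≠ 0 → fderiv ℝ u ξ w = 0 → 0 < hessQ u ξ w)

/-- For `x ∈ D` with nearest boundary point `p`, the outer unit normal direction
`n_{π(x)} = (p - x)/‖p - x‖`. -/
def nvec {d : ℕ} (x p : Euc d) : Euc d := ‖p - x‖⁻¹ • (p - x)

/-- Normal component of `v` at `x` with nearest boundary point `p`. -/
def vN {d : ℕ} (x p v : Euc d) : Euc d := ⟪v, nvec x p⟫ • nvec x p

/-- Tangential component of `v` at `x` with nearest boundary point `p`. -/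
def vT {d : ℕ} (x p v : Euc d) : Euc d := v - vN x p v

/-- The intrinsic distance `H` on the boundary `∂D`: infimum of Euclidean lengths of
piecewise `C¹` curves in `∂D` joining two boundary points. -/
def bdist {d : ℕ} (D : Set (Euc d)) (ξ η : Euc d) : ℝ :=
  sInf {L : ℝ | ∃ α : ℝ → Euc d, PiecewiseC1On α 0 1 ∧
    (∀ t ∈ Set.Icc (0:ℝ) 1, α t ∈ frontier D) ∧ α 0 = ξ ∧ α 1 = η ∧
    L = ∫ t in (0:ℝ)..(1:ℝ), ‖deriv α t‖}

/-- `h(x) = δ_D(x)^{1/2}`. -/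
def hfun {d : ℕ} (D : Set (Euc d)) (x : Euc d) : ℝ :=
  Real.sqrt (Metric.infDist x (frontier D))

/-- The length of a curve with respect to the boundary Finsler metric
`F(x,v) = ‖v_N‖/(2 δ_D(x)) + ‖v_T‖/δ_D(x)^{1/2}`. -/
def Flen {d : ℕ} (D : Set (Euc d)) (π : Euc d → Euc d) (γ : ℝ → Euc d) : ℝ :=
  ∫ t in (0:ℝ)..(1:ℝ),
    (‖vN (γ t) (π (γ t)) (deriv γ t)‖ / (2 * Metric.infDist (γ t) (frontier D))
      + ‖vT (γ t) (π (γ t)) (deriv γ t)‖ / Real.sqrt (Metric.infDist (γ t) (frontier D)))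

/-- The filling Finsler metric `F`: the boundary Finsler metric on
`N = {δ_D ≤ ε}` and `c‖v‖` elsewhere. -/
def Fmet {d : ℕ} (D : Set (Euc d)) (π : Euc d → Euc d) (ε c : ℝ) (x v : Euc d) : ℝ :=
  if Metric.infDist x (frontier D) ≤ ε then
    ‖vN x (π x) v‖ / (2 * Metric.infDist x (frontier D))
      + ‖vT x (π x) v‖ / Real.sqrt (Metric.infDist x (frontier D))
  else c * ‖v‖

/-- The intrinsic distance `d_F` associated to the filling Finsler metric `F`. -/
def dF {d : ℕ} (D : Set (Euc d)) (π : Euc d → Euc d) (ε c : ℝ) (x y : Euc d) : ℝ :=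
  sInf {L : ℝ | ∃ γ : ℝ → Euc d, PiecewiseC1On γ 0 1 ∧
    (∀ t ∈ Set.Icc (0:ℝ) 1, γ t ∈ D) ∧ γ 0 = x ∧ γ 1 = y ∧
    L = ∫ t in (0:ℝ)..(1:ℝ), Fmet D π ε c (γ t) (deriv γ t)}

/-- The hyperbolic filling distance
`d_H(x,y) = 2 log((H(π x, π y) + h(x) ∨ h(y)) / √(h(x) h(y)))`. -/
def dH {d : ℕ} (D : Set (Euc d)) (π : Euc d → Euc d) (x y : Euc d) : ℝ :=
  2 * Real.log ((bdist D (π x) (π y) + max (hfun D x) (hfun D y)) /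
    Real.sqrt (hfun D x * hfun D y))

/-- `δ̂_D(x,v)`: the supremum over 2-dimensional linear subspaces `Λ ∋ v` of the
distance (in `ℝ≥0∞`, so `∞` if `x + Λ ⊆ D`) from `x` to `(x + Λ) \ D`. -/
def deltaHat {d : ℕ} (D : Set (Euc d)) (x v : Euc d) : ℝ≥0∞ :=
  ⨆ (Λ : Submodule ℝ (Euc d)) (_ : Module.finrank ℝ Λ = 2) (_ : v ∈ Λ),
    ⨅ (y : Euc d) (_ : y - x ∈ Λ ∧ y ∉ D), edist x y

/-- The positive parameter at which the ray `t ↦ x + t • v` exits the convex domain `D`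
(equal to `0`, by the `sInf ∅ = 0` convention, when the ray stays in `D`,
i.e. when the corresponding chord endpoint is the point at infinity). -/
def chordParam {d : ℕ} (D : Set (Euc d)) (x v : Euc d) : ℝ :=
  sInf {s : ℝ | 0 < s ∧ x + s • v ∉ D}

/-- The Hilbert Finsler metric `h_D(x,v) = (‖v‖/2)(1/‖x-a‖ + 1/‖x-b‖)` of a convex
domain, with the convention `1/‖x-∞‖ = 0` (here `‖x-b‖ = chordParam D x v • ‖v‖` and
`‖x-a‖ = chordParam D x (-v) • ‖v‖`, and division by zero is zero). -/
def hilbertFinsler {d : ℕ} (D : Set (Euc d)) (x v : Euc d) : ℝ :=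
  (1/2) * (1 / chordParam D x v + 1 / chordParam D x (-v))

/- The Hilbert distance of a convex domain: for `x ≠ y`,
`H_D(x,y) = ½ log((‖x-b‖ ‖y-a‖)/(‖x-a‖ ‖y-b‖))` where `a, x, y, b` are aligned on the
chord through `x, y`, with the convention that ratios involving the point at infinity
(detected by `chordParam = 0`) are equal to `1`. -/
open Classical in
def hilbertDist {d : ℕ} (D : Set (Euc d)) (x y : Euc d) : ℝ :=
  if x = y then 0 else
    (1/2) * Real.log
      ((if chordParam D x (y - x) = 0 then 1
        else chordParam D x (y - x) / (chordParam D x (y - x) - 1)) *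
       (if chordParam D x (x - y) = 0 then 1
        else (1 + chordParam D x (x - y)) / chordParam D x (x - y)))

section Auxiliary

/-! ### Piecewise `C¹` curves -/

open scoped Topology NNReal
open MeasureTheory

variable {d : ℕ}

/-- Piecewise `C¹` curves with the subdivision indexed by `ℕ`, which is easier to concatenate. -/
lemma piecewiseC1On_iff {γ : ℝ → Euc d} {a b : ℝ} :
    PiecewiseC1On γ a b ↔ ContinuousOn γ (Icc a b) ∧
      ∃ (n : ℕ) (t : ℕ → ℝ), Monotone t ∧ t 0 = a ∧ t n = b ∧
        ∀ i < n, ContDiffOn ℝ 1 γ (Icc (t i) (t (i + 1))) := by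
  constructor
  · rintro ⟨hc, n, t, ht, h0, h1, h⟩
    refine ⟨hc, n + 1, fun i => t ⟨min i (n + 1), by omega⟩, ?_, ?_, ?_, ?_⟩
    · intro i j hij
      apply ht
      simp only [Fin.mk_le_mk]
      omega
    · simpa using h0
    · simp only [min_self]
      exact h1
    · intro i hi
      have := h ⟨i, hi⟩
      have e1 : min i (n + 1) = i := by omega
      have e2 : min (i + 1) (n + 1) = i + 1 := by omega
      simpa [e1, e2, Fin.castSucc, Fin.castAdd, Fin.castLE, Fin.succ] using this
  · rintro ⟨hc, n, t, ht, h0, h1, h⟩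
    -- one stationary piece is appended, since the definition asks for at least one piece
    refine ⟨hc, n, fun i => t (min i n), ?_, ?_, ?_, ?_⟩
    · intro i j hij
      apply ht
      have : (i : ℕ) ≤ j := hij
      omega
    · simpa using h0
    · simpa using h1
    · intro i
      rcases Nat.lt_or_ge i n with hi | hi
      · have e1 : min (i : ℕ) n = i := by omega
        have e2 : min ((i : ℕ) + 1) n = i + 1 := by omega
        simpa [e1, e2] using h i hi
      · have e1 : min (i : ℕ) n = n := by omega
        have e2 : min ((i : ℕ) + 1) n = n := by omega
        simp only [Fin.val_castSucc, Fin.val_succ, e1, e2, Icc_self]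
        rintro x rfl
        exact contDiffWithinAt_singleton

lemma PiecewiseC1On.congr {γ η : ℝ → Euc d} {a b : ℝ} (h : PiecewiseC1On γ a b)
    (he : EqOn η γ (Icc a b)) : PiecewiseC1On η a b := by
  rw [piecewiseC1On_iff] at h ⊢
  obtain ⟨hc, n, t, ht, h0, h1, h⟩ := h
  refine ⟨hc.congr he, n, t, ht, h0, h1, fun i hi => (h i hi).congr fun x hx => he ?_⟩
  have l1 : a ≤ t i := h0 ▸ ht (Nat.zero_le i)
  have l2 : t (i + 1) ≤ b := h1 ▸ ht hi
  exact ⟨l1.trans hx.1, hx.2.trans l2⟩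

lemma PiecewiseC1On.trans {γ : ℝ → Euc d} {a b c : ℝ} (h : PiecewiseC1On γ a b)
    (h' : PiecewiseC1On γ b c) (hab : a ≤ b) (hbc : b ≤ c) : PiecewiseC1On γ a c := by
  rw [piecewiseC1On_iff] at h h' ⊢
  obtain ⟨hc, n, t, ht, h0, h1, h⟩ := h
  obtain ⟨hc', n', t', ht', h0', h1', h'⟩ := h'
  refine ⟨?_, n + n', fun i => if i ≤ n then t i else t' (i - n), ?_, ?_, ?_, ?_⟩
  · rw [← Icc_union_Icc_eq_Icc hab hbc]
    exact hc.union_of_isClosed hc' isClosed_Icc isClosed_Icc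
  · intro i j hij
    by_cases hi : i ≤ n <;> by_cases hj : j ≤ n <;> simp only [hi, hj, if_true, if_false]
    · exact ht hij
    · calc t i ≤ t n := ht hi
        _ = t' 0 := by rw [h1, h0']
        _ ≤ _ := ht' (Nat.zero_le _)
    · omega
    · exact ht' (by omega)
  · simpa using h0
  · rcases Nat.eq_zero_or_pos n' with rfl | hn'
    · simp only [add_zero, le_refl, if_true]
      rw [h1, ← h0', h1']
    · have : ¬ (n + n' ≤ n) := by omega
      simp only [this, if_false, Nat.add_sub_cancel_left, h1']
  · intro i hi
    rcases Nat.lt_trichotomy i n with hin | hin | hin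
    · have e1 : i ≤ n := hin.le
      have e2 : i + 1 ≤ n := hin
      simpa only [e1, e2, if_true] using h i hin
    · subst hin
      have e2 : ¬ (i + 1 ≤ i) := by omega
      simp only [le_refl, e2, if_true, if_false, Nat.add_sub_cancel_left]
      have := h' 0 (by omega)
      rw [h1, ← h0']
      simpa using this
    · have e1 : ¬ (i ≤ n) := by omega
      have e2 : ¬ (i + 1 ≤ n) := by omega
      have := h' (i - n) (by omega)
      simp only [e1, e2, if_false]
      rwa [show i + 1 - n = i - n + 1 by omega]

lemma PiecewiseC1On.comp_affine {γ : ℝ → Euc d} {p q a b : ℝ} (ha : 0 < a)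
    (h : PiecewiseC1On γ (a * p + b) (a * q + b)) :
    PiecewiseC1On (fun t => γ (a * t + b)) p q := by
  rw [piecewiseC1On_iff] at h ⊢
  obtain ⟨hc, n, t, ht, h0, h1, h⟩ := h
  refine ⟨?_, n, fun i => (t i - b) / a, ?_, ?_, ?_, ?_⟩
  · refine hc.comp (by fun_prop) fun x hx => ⟨?_, ?_⟩
    · have := mul_le_mul_of_nonneg_left hx.1 ha.le
      linarith
    · have := mul_le_mul_of_nonneg_left hx.2 ha.le
      linarith
  · intro i j hij
    have := ht hij
    dsimp only
    gcongr
  · simp only [h0]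
    field_simp
    ring
  · simp only [h1]
    field_simp
    ring
  · intro i hi
    refine (h i hi).comp (t := Icc (t i) (t (i + 1))) (by fun_prop) fun x hx => ?_
    have h1 := (div_le_iff₀ ha).1 hx.1
    have h2 := (le_div_iff₀ ha).1 hx.2
    constructor <;> linarith

lemma PiecewiseC1On.comp_contDiffOn {γ : ℝ → Euc d} {a b : ℝ} {f : Euc d → Euc d}
    {W : Set (Euc d)} (h : PiecewiseC1On γ a b) (hf : ContDiffOn ℝ 1 f W)
    (hm : ∀ t ∈ Icc a b, γ t ∈ W) : PiecewiseC1On (fun t => f (γ t)) a b := by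
  rw [piecewiseC1On_iff] at h ⊢
  obtain ⟨hc, n, t, ht, h0, h1, h⟩ := h
  refine ⟨hf.continuousOn.comp hc hm, n, t, ht, h0, h1, fun i hi =>
    hf.comp (h i hi) fun x hx => hm x ?_⟩
  have l1 : a ≤ t i := h0 ▸ ht (Nat.zero_le i)
  have l2 : t (i + 1) ≤ b := h1 ▸ ht hi
  exact ⟨l1.trans hx.1, hx.2.trans l2⟩

lemma piecewiseC1On_of_contDiffOn {γ : ℝ → Euc d} {a b : ℝ} (hab : a ≤ b)
    (h : ContDiffOn ℝ 1 γ (Icc a b)) : PiecewiseC1On γ a b := by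
  rw [piecewiseC1On_iff]
  refine ⟨h.continuousOn, 1, fun i => if i = 0 then a else b, ?_, by simp, by simp, ?_⟩
  · intro i j hij
    by_cases hi : i = 0 <;> by_cases hj : j = 0 <;> simp [hi, hj, hab]
    omega
  · intro i hi
    obtain rfl : i = 0 := by omega
    simpa using h

lemma lipschitzOnWith_Icc_glue {γ : ℝ → Euc d} {a b c : ℝ} {K : ℝ≥0}
    (h : LipschitzOnWith K γ (Icc a b)) (h' : LipschitzOnWith K γ (Icc b c))
    (hab : a ≤ b) (hbc : b ≤ c) : LipschitzOnWith K γ (Icc a c) := by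
  have key : ∀ x ∈ Icc a c, ∀ y ∈ Icc a c, x ≤ y → dist (γ x) (γ y) ≤ K * dist x y := by
    intro x hx y hy hxy
    rcases le_total y b with hyb | hyb
    · exact h.dist_le_mul x ⟨hx.1, hxy.trans hyb⟩ y ⟨hy.1, hyb⟩
    · rcases le_total x b with hxb | hxb
      · have h1 := h.dist_le_mul x ⟨hx.1, hxb⟩ b ⟨hab, le_rfl⟩
        have h2 := h'.dist_le_mul b ⟨le_rfl, hbc⟩ y ⟨hyb, hy.2⟩
        have h3 := dist_triangle (γ x) (γ b) (γ y)
        have e1 : dist x b = b - x := by rw [Real.dist_eq, abs_sub_comm, abs_of_nonneg]; linarith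
        have e2 : dist b y = y - b := by rw [Real.dist_eq, abs_sub_comm, abs_of_nonneg]; linarith
        have e3 : dist x y = y - x := by rw [Real.dist_eq, abs_sub_comm, abs_of_nonneg]; linarith
        rw [e1] at h1
        rw [e2] at h2
        rw [e3]
        calc _ ≤ _ := h3
          _ ≤ K * (b - x) + K * (y - b) := add_le_add h1 h2
          _ = _ := by ring
      · exact h'.dist_le_mul x ⟨hxb, hx.2⟩ y ⟨hyb, hy.2⟩
  refine LipschitzOnWith.of_dist_le_mul fun x hx y hy => ?_
  rcases le_total x y with hxy | hxy
  · exact key x hx y hy hxy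
  · rw [dist_comm, dist_comm x y]
    exact key y hy x hx hxy

lemma PiecewiseC1On.exists_lipschitzOnWith {γ : ℝ → Euc d} {a b : ℝ}
    (h : PiecewiseC1On γ a b) : ∃ K, LipschitzOnWith K γ (Icc a b) := by
  rw [piecewiseC1On_iff] at h
  obtain ⟨-, n, t, ht, rfl, rfl, h⟩ := h
  have : ∀ m ≤ n, ∃ K, LipschitzOnWith K γ (Icc (t 0) (t m)) := by
    intro m
    induction m with
    | zero =>
      intro _
      refine ⟨0, ?_⟩
      rw [Icc_self]
      exact LipschitzOnWith.of_dist_le_mul (by rintro x rfl y rfl; simp)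
    | succ m ih =>
      intro hm
      obtain ⟨K, hK⟩ := ih (by omega)
      obtain ⟨K', hK'⟩ := (h m (by omega)).exists_lipschitzOnWith one_ne_zero
        (convex_Icc _ _) isCompact_Icc
      exact ⟨max K K', lipschitzOnWith_Icc_glue (hK.weaken (le_max_left _ _))
        (hK'.weaken (le_max_right _ _)) (ht (Nat.zero_le _)) (ht (Nat.le_succ _))⟩
  exact this n le_rfl

/-! ### Joining points by curves of bounded length -/

/-- `Conn S G x y L`: some piecewise `C¹` curve inside `S` runs from `x` to `y`, and its length with
respect to the length element `G` is well defined (integrable) and at most `L`. -/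
def Conn (S : Set (Euc d)) (G : Euc d → Euc d → ℝ) (x y : Euc d) (L : ℝ) : Prop :=
  ∃ γ : ℝ → Euc d, PiecewiseC1On γ 0 1 ∧ (∀ t ∈ Icc (0:ℝ) 1, γ t ∈ S) ∧ γ 0 = x ∧ γ 1 = y ∧
    IntervalIntegrable (fun t => G (γ t) (deriv γ t)) volume 0 1 ∧
    ∫ t in (0:ℝ)..1, G (γ t) (deriv γ t) ≤ L

lemma Conn.mono {S : Set (Euc d)} {G : Euc d → Euc d → ℝ} {x y : Euc d} {L L' : ℝ}
    (h : Conn S G x y L) (hL : L ≤ L') : Conn S G x y L' := by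
  obtain ⟨γ, h1, h2, h3, h4, h5, h6⟩ := h
  exact ⟨γ, h1, h2, h3, h4, h5, h6.trans hL⟩

lemma deriv_comp_affine (γ : ℝ → Euc d) (a b t : ℝ) :
    deriv (fun t => γ (a * t + b)) t = a • deriv γ (a * t + b) := by
  have := deriv_comp_mul_left a (fun s => γ (s + b)) t
  rw [deriv_comp_add_const] at this
  exact this

lemma intervalIntegrable_comp_affine {f : ℝ → ℝ} {p q a b : ℝ} (ha : a ≠ 0)
    (h : IntervalIntegrable f volume (a * p + b) (a * q + b)) :
    IntervalIntegrable (fun t => f (a * t + b)) volume p q := by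
  have h1 := h.comp_add_right b
  have h2 := h1.comp_mul_left (c := a)
  simpa [ha] using h2

lemma Conn.trans {S : Set (Euc d)} {G : Euc d → Euc d → ℝ}
    (hG : ∀ x v, ∀ a : ℝ, 0 < a → G x (a • v) = a * G x v) {x y z : Euc d} {L L' : ℝ}
    (h : Conn S G x y L) (h' : Conn S G y z L') : Conn S G x z (L + L') := by
  obtain ⟨γ, h1, h2, h3, h4, h5, h6⟩ := h
  obtain ⟨η, k1, k2, k3, k4, k5, k6⟩ := h'
  let σ : ℝ → Euc d := fun t => if t ≤ 1 / 2 then γ (2 * t + 0) else η (2 * t + (-1))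
  have e1 : EqOn σ (fun t => γ (2 * t + 0)) (Icc 0 (1 / 2)) := by
    intro t ht
    simp only [σ, ht.2, if_true]
  have e2 : EqOn σ (fun t => η (2 * t + (-1))) (Icc (1 / 2) 1) := by
    intro t ht
    rcases eq_or_lt_of_le ht.1 with h | h
    · rw [← h]
      simp only [σ, le_refl, if_true]
      norm_num
      rw [h4, k3]
    · simp only [σ, not_le.2 h, if_false]
  have d1 : EqOn (fun t => G (σ t) (deriv σ t))
      (fun t => 2 * (fun s => G (γ s) (deriv γ s)) (2 * t + 0)) (uIoo 0 (1 / 2)) := by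
    intro t ht
    rw [uIoo_of_le (by norm_num)] at ht
    have : σ =ᶠ[𝓝 t] fun t => γ (2 * t + 0) := by
      filter_upwards [Ioo_mem_nhds ht.1 ht.2] with s hs using e1 ⟨hs.1.le, hs.2.le⟩
    simp only [this.deriv_eq, this.eq_of_nhds, deriv_comp_affine, hG _ _ 2 two_pos]
  have d2 : EqOn (fun t => G (σ t) (deriv σ t))
      (fun t => 2 * (fun s => G (η s) (deriv η s)) (2 * t + (-1))) (uIoo (1 / 2) 1) := by
    intro t ht
    rw [uIoo_of_le (by norm_num)] at ht
    have : σ =ᶠ[𝓝 t] fun t => η (2 * t + (-1)) := by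
      filter_upwards [Ioo_mem_nhds ht.1 ht.2] with s hs using e2 ⟨hs.1.le, hs.2.le⟩
    simp only [this.deriv_eq, this.eq_of_nhds, deriv_comp_affine, hG _ _ 2 two_pos]
  have i1 : IntervalIntegrable (fun t => G (σ t) (deriv σ t)) volume 0 (1 / 2) := by
    rw [intervalIntegrable_congr_uIoo d1]
    refine (intervalIntegrable_comp_affine (f := fun s => G (γ s) (deriv γ s)) (a := 2) (b := 0)
      two_ne_zero ?_).const_mul 2
    norm_num
    exact h5
  have i2 : IntervalIntegrable (fun t => G (σ t) (deriv σ t)) volume (1 / 2) 1 := by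
    rw [intervalIntegrable_congr_uIoo d2]
    refine (intervalIntegrable_comp_affine (f := fun s => G (η s) (deriv η s)) (a := 2) (b := (-1))
      two_ne_zero ?_).const_mul 2
    norm_num
    exact k5
  refine ⟨σ, ?_, ?_, ?_, ?_, i1.trans i2, ?_⟩
  · refine PiecewiseC1On.trans (b := 1 / 2) (PiecewiseC1On.congr ?_ e1)
      (PiecewiseC1On.congr ?_ e2) (by norm_num) (by norm_num)
    · refine PiecewiseC1On.comp_affine two_pos ?_
      norm_num
      exact h1
    · refine PiecewiseC1On.comp_affine two_pos ?_
      norm_num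
      exact k1
  · intro t ht
    rcases le_total t (1 / 2) with h | h
    · rw [e1 ⟨ht.1, h⟩]
      exact h2 _ ⟨by linarith [ht.1], by linarith⟩
    · rw [e2 ⟨h, ht.2⟩]
      exact k2 _ ⟨by linarith, by linarith [ht.2]⟩
  · rw [e1 ⟨le_rfl, by norm_num⟩]
    simpa using h3
  · rw [e2 ⟨by norm_num, le_rfl⟩]
    norm_num
    exact k4
  · rw [← intervalIntegral.integral_add_adjacent_intervals i1 i2,
      intervalIntegral.integral_congr_uIoo d1, intervalIntegral.integral_congr_uIoo d2,
      intervalIntegral.integral_const_mul, intervalIntegral.integral_const_mul]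
    have a1 := intervalIntegral.smul_integral_comp_mul_add (a := 0) (b := 1 / 2)
      (fun s => G (γ s) (deriv γ s)) 2 0
    have a2 := intervalIntegral.smul_integral_comp_mul_add (a := 1 / 2) (b := 1)
      (fun s => G (η s) (deriv η s)) 2 (-1)
    simp only [smul_eq_mul] at a1 a2
    rw [a1, a2]
    norm_num
    exact add_le_add h6 k6

/-- If nearby points of a preconnected set `S` are joined with locally bounded cost, then so are, with
one common bound, all pairs of points of a compact subset of `S`. -/
lemma exists_conn_bound {S K : Set (Euc d)} {G : Euc d → Euc d → ℝ}
    (hG : ∀ x v, ∀ a : ℝ, 0 < a → G x (a • v) = a * G x v) (hS : IsPreconnected S)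
    (hloc : ∀ x ∈ S, ∃ V ∈ 𝓝[S] x, ∃ M : ℝ, ∀ y ∈ V, ∀ z ∈ V, Conn S G y z M)
    (hK : IsCompact K) (hKS : K ⊆ S) :
    ∃ M : ℝ, ∀ x ∈ K, ∀ y ∈ K, Conn S G x y M := by
  rcases K.eq_empty_or_nonempty with rfl | ⟨o, ho⟩
  · exact ⟨0, by simp⟩
  have hfin : ∀ x ∈ S, ∀ y ∈ S, ∃ M, Conn S G x y M := by
    intro x hx y hy
    refine hS.induction₂' (fun x y => ∃ M, Conn S G x y M) ?_ ?_ hx hy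
    · intro z hz
      obtain ⟨V, hV, M, hM⟩ := hloc z hz
      filter_upwards [hV] with w hw
      have hzV := mem_of_mem_nhdsWithin hz hV
      exact ⟨⟨M, hM z hzV w hw⟩, ⟨M, hM w hw z hzV⟩⟩
    · rintro p q r - - - ⟨M, hM⟩ ⟨M', hM'⟩
      exact ⟨M + M', hM.trans hG hM'⟩
  have hb : ∃ M, ∀ x ∈ K, Conn S G o x M ∧ Conn S G x o M := by
    refine hK.induction_on (p := fun T => ∃ M, ∀ x ∈ T, Conn S G o x M ∧ Conn S G x o M)
      ⟨0, by simp⟩ ?_ ?_ ?_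
    · rintro s t hst ⟨M, hM⟩
      exact ⟨M, fun x hx => hM x (hst hx)⟩
    · rintro s t ⟨M, hM⟩ ⟨M', hM'⟩
      refine ⟨max M M', ?_⟩
      rintro x (hx | hx)
      · exact ⟨(hM x hx).1.mono (le_max_left _ _), (hM x hx).2.mono (le_max_left _ _)⟩
      · exact ⟨(hM' x hx).1.mono (le_max_right _ _), (hM' x hx).2.mono (le_max_right _ _)⟩
    · intro x hx
      obtain ⟨V, hV, M, hM⟩ := hloc x (hKS hx)
      obtain ⟨M1, h1⟩ := hfin o (hKS ho) x (hKS hx)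
      obtain ⟨M2, h2⟩ := hfin x (hKS hx) o (hKS ho)
      have hxV := mem_of_mem_nhdsWithin (hKS hx) hV
      refine ⟨V, nhdsWithin_mono _ hKS hV, max (M1 + M) (M + M2), fun y hy => ⟨?_, ?_⟩⟩
      · exact (h1.trans hG (hM x hxV y hy)).mono (le_max_left _ _)
      · exact ((hM y hy x hxV).trans hG h2).mono (le_max_right _ _)
  obtain ⟨M, hM⟩ := hb
  exact ⟨M + M, fun x hx y hy => (hM x hx).2.trans hG (hM y hy).1⟩

/-! ### Calculus along Lipschitz curves -/

/-- Fundamental theorem of calculus for Lipschitz functions, as an inequality. -/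
lemma abs_sub_le_integral_of_abs_deriv_le {f g : ℝ → ℝ} {K : ℝ≥0}
    (hf : LipschitzOnWith K f (Icc 0 1)) (hg : IntervalIntegrable g volume 0 1)
    (h : ∀ᵐ t, t ∈ Ioo (0:ℝ) 1 → |deriv f t| ≤ g t) :
    |f 1 - f 0| ≤ ∫ t in (0:ℝ)..1, g t := by
  have hac : AbsolutelyContinuousOnInterval f 0 1 := by
    apply LipschitzOnWith.absolutelyContinuousOnInterval (K := K)
    rwa [uIcc_of_le zero_le_one]
  rw [← hac.integral_deriv_eq_sub, ← Real.norm_eq_abs]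
  refine intervalIntegral.norm_integral_le_of_norm_le zero_le_one ?_ hg
  have h1 : ∀ᵐ t : ℝ, t ≠ 1 := by simp [ae_iff]
  filter_upwards [h, h1] with t ht h1 htI
  exact ht ⟨htI.1, lt_of_le_of_ne htI.2 h1⟩

lemma ae_differentiableAt_of_lipschitzOnWith {E : Type*} [NormedAddCommGroup E] [NormedSpace ℝ E]
    [FiniteDimensional ℝ E] {f : ℝ → E} {K : ℝ≥0} (hf : LipschitzOnWith K f (Icc 0 1)) :
    ∀ᵐ t : ℝ, t ∈ Ioo (0:ℝ) 1 → DifferentiableAt ℝ f t := by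
  filter_upwards [hf.ae_differentiableWithinAt_of_mem_real] with t ht htI
  exact (ht ⟨htI.1.le, htI.2.le⟩).differentiableAt (Icc_mem_nhds htI.1 htI.2)

lemma abs_deriv_norm_sub_le {γ : ℝ → Euc d} {z : Euc d} {t : ℝ} (hγ : DifferentiableAt ℝ γ t)
    (hs : DifferentiableAt ℝ (fun t => ‖γ t - z‖) t) :
    |deriv (fun t => ‖γ t - z‖) t| ≤ ‖deriv γ t‖ := by
  have h1 := (hasDerivAt_iff_tendsto_slope.1 hs.hasDerivAt).norm
  have h2 := (hasDerivAt_iff_tendsto_slope.1 hγ.hasDerivAt).norm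
  rw [← Real.norm_eq_abs]
  refine le_of_tendsto_of_tendsto h1 h2 (Eventually.of_forall fun y => ?_)
  simp only [slope_def_module, norm_smul]
  gcongr
  have := abs_norm_sub_norm_le (γ y - z) (γ t - z)
  simpa using this

lemma norm_nvec {x p : Euc d} (h : x ≠ p) : ‖nvec x p‖ = 1 := by
  have : ‖p - x‖ ≠ 0 := norm_ne_zero_iff.2 (sub_ne_zero.2 h.symm)
  rw [nvec, norm_smul, norm_inv, norm_norm, inv_mul_cancel₀ this]

lemma norm_vN {x p : Euc d} (h : x ≠ p) (v : Euc d) : ‖vN x p v‖ = |⟪v, nvec x p⟫| := by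
  rw [vN, norm_smul, norm_nvec h, mul_one, Real.norm_eq_abs]

lemma norm_le_vN_add_vT (x p v : Euc d) : ‖v‖ ≤ ‖vN x p v‖ + ‖vT x p v‖ := by
  have : v = vN x p v + vT x p v := by simp [vT]
  calc ‖v‖ = ‖vN x p v + vT x p v‖ := by rw [← this]
    _ ≤ _ := norm_add_le _ _

lemma norm_vN_le {x p : Euc d} (h : x ≠ p) (v : Euc d) : ‖vN x p v‖ ≤ ‖v‖ := by
  rw [norm_vN h]
  simpa [norm_nvec h] using abs_real_inner_le_norm v (nvec x p)

lemma norm_vT_le {x p : Euc d} (h : x ≠ p) (v : Euc d) : ‖vT x p v‖ ≤ 2 * ‖v‖ := by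
  have := norm_sub_le v (vN x p v)
  have h2 := norm_vN_le h v
  rw [vT]
  linarith

/-- A function lying below `s ↦ ‖γ s - p‖` and touching it at `t` has at `t` the derivative
`-⟪γ' t, n⟫`, where `n` is the unit vector pointing from `γ t` to `p`. -/
lemma deriv_eq_of_touching {γ : ℝ → Euc d} {p : Euc d} {φ : ℝ → ℝ} {t : ℝ}
    (hγ : DifferentiableAt ℝ γ t) (hφ : DifferentiableAt ℝ φ t) (hne : γ t ≠ p)
    (h0 : ∀ s, 0 ≤ φ s) (hle : ∀ s, φ s ≤ ‖γ s - p‖) (heq : φ t = ‖γ t - p‖) :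
    deriv φ t = - ⟪deriv γ t, nvec (γ t) p⟫ := by
  have hpos : 0 < ‖γ t - p‖ := norm_pos_iff.2 (sub_ne_zero.2 hne)
  have h1 : HasDerivAt (fun s => ‖γ s - p‖ ^ 2) (2 * ⟪γ t - p, deriv γ t⟫) t :=
    (hγ.hasDerivAt.sub_const p).norm_sq
  have h2 : HasDerivAt (fun s => φ s ^ 2) (2 * φ t * deriv φ t) t := by
    have := hφ.hasDerivAt.fun_pow 2
    simpa using this
  have hmin : IsLocalMin (fun s => ‖γ s - p‖ ^ 2 - φ s ^ 2) t := by
    refine Eventually.of_forall fun s => ?_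
    have := pow_le_pow_left₀ (h0 s) (hle s) 2
    simp only [heq, sub_self]
    linarith
  have h3 := hmin.hasDerivAt_eq_zero (h1.sub h2)
  rw [heq] at h3
  have h4 : nvec (γ t) p = -(‖γ t - p‖⁻¹ • (γ t - p)) := by
    rw [nvec, norm_sub_rev, ← smul_neg, neg_sub]
  rw [h4, inner_neg_right, inner_smul_right, real_inner_comm, neg_neg]
  field_simp
  linarith

/-! ### The Finsler metric `F` -/

lemma Fmet_nonneg (D : Set (Euc d)) (π : Euc d → Euc d) {ε c : ℝ} (hc : 0 < c) (x v : Euc d) :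
    0 ≤ Fmet D π ε c x v := by
  have := Metric.infDist_nonneg (x := x) (s := frontier D)
  unfold Fmet
  split_ifs <;> positivity

lemma Fmet_smul (D : Set (Euc d)) (π : Euc d → Euc d) (ε c : ℝ) (x v : Euc d) (a : ℝ)
    (ha : 0 < a) : Fmet D π ε c x (a • v) = a * Fmet D π ε c x v := by
  have h1 : vN x (π x) (a • v) = a • vN x (π x) v := by
    rw [vN, vN, inner_smul_left, smul_smul]
    rfl
  have h2 : vT x (π x) (a • v) = a • vT x (π x) v := by
    rw [vT, vT, h1, smul_sub]
  unfold Fmet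
  split_ifs
  · rw [h1, h2, norm_smul, norm_smul, Real.norm_of_nonneg ha.le]
    ring
  · rw [norm_smul, Real.norm_of_nonneg ha.le]
    ring

section
variable {D : Set (Euc d)} {π : Euc d → Euc d} {ε c : ℝ}

lemma Fmet_le (hc : 0 < c) {x : Euc d}
    (hx : dist x (π x) = infDist x (frontier D)) {a : ℝ} (ha : 0 < a)
    (hax : a ≤ infDist x (frontier D)) (v : Euc d) :
    Fmet D π ε c x v ≤ (1 / (2 * a) + 2 / √a + c) * ‖v‖ := by
  have hne : x ≠ π x := by
    intro h
    rw [← h, dist_self] at hx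
    linarith
  have h1 := norm_vN_le hne v
  have h2 := norm_vT_le hne v
  have h3 : 0 < √a := Real.sqrt_pos.2 ha
  have h4 : √a ≤ √(infDist x (frontier D)) := Real.sqrt_le_sqrt hax
  have h5 : 0 ≤ ‖v‖ := norm_nonneg v
  unfold Fmet
  split_ifs
  · calc _ ≤ ‖v‖ / (2 * a) + 2 * ‖v‖ / √a := by gcongr
      _ = (1 / (2 * a) + 2 / √a) * ‖v‖ := by ring
      _ ≤ _ := by
        have : 0 ≤ c * ‖v‖ := by positivity
        linarith
  · have : 0 ≤ (1 / (2 * a) + 2 / √a) * ‖v‖ := by positivity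
    linarith

/-- Uniqueness of the nearest point makes the projection continuous near the boundary. -/
lemma continuousOn_proj (hfr : IsCompact (frontier D))
    (hπ : ∀ x ∈ D, π x ∈ frontier D ∧ dist x (π x) = infDist x (frontier D))
    (hπN : ∀ x ∈ D, infDist x (frontier D) ≤ ε →
      ∀ q ∈ frontier D, dist x q = infDist x (frontier D) → q = π x) :
    ContinuousOn π {x | x ∈ D ∧ infDist x (frontier D) ≤ ε} := by
  rintro x₀ ⟨hx₀, hx₀ε⟩
  refine hfr.tendsto_nhds_of_unique_mapClusterPt
    (eventually_nhdsWithin_of_forall fun x hx => (hπ x hx.1).1) fun q hq hcl => ?_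
  refine hπN x₀ hx₀ hx₀ε q hq (le_antisymm ?_ (infDist_le_dist_of_mem hq))
  refine le_of_forall_pos_le_add fun η hη => ?_
  have hf : ∃ᶠ x in 𝓝[{x | x ∈ D ∧ infDist x (frontier D) ≤ ε}] x₀, π x ∈ ball q (η / 3) :=
    (mapClusterPt_iff_frequently.1 hcl) _ (ball_mem_nhds q (by positivity))
  have he : ∀ᶠ x in 𝓝[{x | x ∈ D ∧ infDist x (frontier D) ≤ ε}] x₀,
      x ∈ ball x₀ (η / 3) ∧ x ∈ D :=
    (eventually_nhdsWithin_of_eventually_nhds (ball_mem_nhds x₀ (by positivity))).and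
      (eventually_nhdsWithin_of_forall fun x hx => hx.1)
  obtain ⟨x, hxq, hx, hxD⟩ := (hf.and_eventually he).exists
  rw [mem_ball] at hxq hx
  have h1 := dist_triangle4 x₀ x (π x) q
  have h2 := (hπ x hxD).2
  have h3 := infDist_le_infDist_add_dist (x := x) (y := x₀) (s := frontier D)
  rw [dist_comm] at hx
  rw [dist_comm x x₀] at h3
  linarith

lemma intervalIntegrable_Fmet (hfr : IsCompact (frontier D)) (hc : 0 < c)
    (hδ : ∀ x ∈ D, 0 < infDist x (frontier D))
    (hπ : ∀ x ∈ D, π x ∈ frontier D ∧ dist x (π x) = infDist x (frontier D))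
    (hπN : ∀ x ∈ D, infDist x (frontier D) ≤ ε →
      ∀ q ∈ frontier D, dist x q = infDist x (frontier D) → q = π x)
    {γ : ℝ → Euc d} (hγ : PiecewiseC1On γ 0 1) (hγD : ∀ t ∈ Icc (0:ℝ) 1, γ t ∈ D) :
    IntervalIntegrable (fun t => Fmet D π ε c (γ t) (deriv γ t)) volume 0 1 := by
  obtain ⟨K, hK⟩ := hγ.exists_lipschitzOnWith
  have hcont := hK.continuousOn
  have hδc : ContinuousOn (fun t => infDist (γ t) (frontier D)) (Icc 0 1) :=
    (continuous_infDist_pt _).comp_continuousOn hcont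
  obtain ⟨t₀, ht₀, hmin⟩ := isCompact_Icc.exists_isMinOn (nonempty_Icc.2 zero_le_one) hδc
  have ha := hδ _ (hγD t₀ ht₀)
  set a := infDist (γ t₀) (frontier D) with hadef
  rw [intervalIntegrable_iff_integrableOn_Icc_of_le zero_le_one]
  -- the closed set of times where the boundary formula for `F` applies
  let T : Set ℝ := Icc 0 1 ∩ {t | infDist (γ t) (frontier D) ≤ ε}
  have hTcl : IsClosed T := hδc.preimage_isClosed_of_isClosed isClosed_Icc isClosed_Iic
  have hTm : MeasurableSet T := hTcl.measurableSet
  have hder : ∀ μ : Measure ℝ, AEStronglyMeasurable (deriv γ) μ := fun μ =>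
    (stronglyMeasurable_deriv γ).aestronglyMeasurable
  have hγm : AEStronglyMeasurable γ (volume.restrict T) :=
    (hcont.mono inter_subset_left).aestronglyMeasurable hTm
  have hπm : AEStronglyMeasurable (fun t => π (γ t)) (volume.restrict T) := by
    refine ContinuousOn.aestronglyMeasurable ?_ hTm
    exact (continuousOn_proj hfr hπ hπN).comp (hcont.mono inter_subset_left)
      fun t ht => ⟨hγD t ht.1, ht.2⟩
  have hδm : AEStronglyMeasurable (fun t => infDist (γ t) (frontier D)) (volume.restrict T) :=
    (hδc.mono inter_subset_left).aestronglyMeasurable hTm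
  have hm : AEStronglyMeasurable (fun t => Fmet D π ε c (γ t) (deriv γ t))
      (volume.restrict (Icc 0 1)) := by
    have hun : Icc (0:ℝ) 1 = T ∪ (Icc 0 1 \ T) := by
      rw [union_sdiff_self, union_eq_right.2 inter_subset_left]
    rw [hun, aestronglyMeasurable_union_iff]
    constructor
    · have hn : AEStronglyMeasurable (fun t => nvec (γ t) (π (γ t))) (volume.restrict T) := by
        unfold nvec
        exact (((hπm.sub hγm).norm.aemeasurable.inv).aestronglyMeasurable).smul (hπm.sub hγm)
      have hvN : AEStronglyMeasurable (fun t => vN (γ t) (π (γ t)) (deriv γ t))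
          (volume.restrict T) := by
        unfold vN
        exact ((hder _).inner (𝕜 := ℝ) hn).smul hn
      have hvT : AEStronglyMeasurable (fun t => vT (γ t) (π (γ t)) (deriv γ t))
          (volume.restrict T) := by
        unfold vT
        exact (hder _).sub hvN
      have : AEStronglyMeasurable (fun t =>
          ‖vN (γ t) (π (γ t)) (deriv γ t)‖ / (2 * infDist (γ t) (frontier D))
          + ‖vT (γ t) (π (γ t)) (deriv γ t)‖ / √(infDist (γ t) (frontier D)))
          (volume.restrict T) := by
        refine AEStronglyMeasurable.add ?_ ?_
        · exact (hvN.norm.aemeasurable.div (hδm.aemeasurable.const_mul 2)).aestronglyMeasurable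
        · exact (hvT.norm.aemeasurable.div hδm.aemeasurable.sqrt).aestronglyMeasurable
      refine this.congr ?_
      filter_upwards [ae_restrict_mem hTm] with t ht
      have h2 : infDist (γ t) (frontier D) ≤ ε := ht.2
      simp only [Fmet, h2, if_true]
    · refine ((hder (volume.restrict (Icc 0 1 \ T))).norm.const_mul c).congr ?_
      filter_upwards [ae_restrict_mem (measurableSet_Icc.diff hTm)] with t ht
      have h2 : ¬ infDist (γ t) (frontier D) ≤ ε := fun h => ht.2 ⟨ht.1, h⟩
      simp only [Fmet, h2, if_false]
  rw [integrableOn_Icc_iff_integrableOn_Ioo]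
  refine Integrable.of_bound
    (hm.mono_measure (Measure.restrict_mono Ioo_subset_Icc_self le_rfl))
    ((1 / (2 * a) + 2 / √a + c) * K) ?_
  filter_upwards [ae_restrict_mem measurableSet_Ioo] with t ht
  have htI : t ∈ Icc (0:ℝ) 1 := ⟨ht.1.le, ht.2.le⟩
  rw [Real.norm_of_nonneg (Fmet_nonneg D π hc _ _)]
  refine (Fmet_le hc (hπ _ (hγD t htI)).2 ha (hmin htI) _).trans ?_
  gcongr
  exact norm_deriv_le_of_lipschitzOn (Icc_mem_nhds ht.1 ht.2) hK

end

/-! ### The potential giving the lower bound -/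

/-- The modified height `√m · exp(-√m / 2)`. Its logarithmic derivative is smaller than that of `√m`
by `m' / (4√m)`; this slack absorbs the normal part of the variation of `‖γ - z‖` below. -/
def wfun (m : ℝ) : ℝ := √m * Real.exp (-√m / 2)

/-- The potential `2 log (s / K + w(m)) - log w(m)` as a function of the distance `s` to a base
point and of the truncated boundary distance `m`. -/
def potential (K s m : ℝ) : ℝ := 2 * Real.log (s / K + wfun m) - Real.log (wfun m)

lemma wfun_pos {m : ℝ} (hm : 0 < m) : 0 < wfun m :=
  mul_pos (Real.sqrt_pos.2 hm) (Real.exp_pos _)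

lemma wfun_le_sqrt (m : ℝ) : wfun m ≤ √m := by
  have : Real.exp (-√m / 2) ≤ 1 := by
    rw [Real.exp_le_one_iff]
    linarith [Real.sqrt_nonneg m]
  calc wfun m ≤ √m * 1 := mul_le_mul_of_nonneg_left this (Real.sqrt_nonneg m)
    _ = √m := mul_one _

lemma half_sqrt_le_wfun {m : ℝ} (hm1 : m ≤ 1) : √m / 2 ≤ wfun m := by
  have h1 : √m ≤ 1 := by
    rw [← Real.sqrt_one]
    exact Real.sqrt_le_sqrt hm1
  have h2 : 1 / 2 ≤ Real.exp (-√m / 2) := by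
    have := Real.add_one_le_exp (-√m / 2)
    linarith
  calc √m / 2 = √m * (1 / 2) := by ring
    _ ≤ _ := mul_le_mul_of_nonneg_left h2 (Real.sqrt_nonneg m)

lemma exists_lipschitzOnWith_potential {K a b S : ℝ} (hK : 0 < K) (ha : 0 < a) :
    ∃ C, LipschitzOnWith C (fun q : ℝ × ℝ => potential K q.1 q.2) (Icc 0 S ×ˢ Icc a b) := by
  refine ContDiffOn.exists_lipschitzOnWith (n := 1) ?_ one_ne_zero
    ((convex_Icc _ _).prod (convex_Icc _ _)) (isCompact_Icc.prod isCompact_Icc)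
  rintro ⟨s, m⟩ ⟨hs, hm⟩
  have hm0 : 0 < m := ha.trans_le hm.1
  have hw : 0 < wfun m := wfun_pos hm0
  have hsum : s / K + wfun m ≠ 0 := by
    have : 0 ≤ s / K := div_nonneg hs.1 hK.le
    positivity
  have hsq : ContDiffAt ℝ 1 (fun q : ℝ × ℝ => √q.2) (s, m) :=
    contDiffAt_snd.sqrt hm0.ne'
  have hwc : ContDiffAt ℝ 1 (fun q : ℝ × ℝ => wfun q.2) (s, m) := by
    unfold wfun
    exact hsq.mul (hsq.neg.div_const 2).exp
  refine ContDiffAt.contDiffWithinAt ?_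
  unfold potential
  refine ContDiffAt.sub (contDiffAt_const.mul (ContDiffAt.log ?_ hsum)) (hwc.log hw.ne')
  exact (contDiffAt_fst.div_const K).add hwc

lemma hasDerivAt_potential {K : ℝ} (hK : 0 < K) {s m : ℝ → ℝ} {s' m' t : ℝ}
    (hs : HasDerivAt s s' t) (hm : HasDerivAt m m' t) (hs0 : 0 ≤ s t) (hm0 : 0 < m t) :
    HasDerivAt (fun t => potential K (s t) (m t))
      (2 * ((s' / K + wfun (m t) * (m' / (2 * m t) - m' / (4 * √(m t))))
          / (s t / K + wfun (m t))) - (m' / (2 * m t) - m' / (4 * √(m t)))) t := by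
  have hw : 0 < wfun (m t) := wfun_pos hm0
  have hu : 0 < √(m t) := Real.sqrt_pos.2 hm0
  have hsum : s t / K + wfun (m t) ≠ 0 := by
    have : 0 ≤ s t / K := div_nonneg hs0 hK.le
    positivity
  have hsq : HasDerivAt (fun t => √(m t)) (m' / (2 * √(m t))) t := hm.sqrt hm0.ne'
  have hwd : HasDerivAt (fun t => wfun (m t))
      (wfun (m t) * (m' / (2 * m t) - m' / (4 * √(m t)))) t := by
    have := hsq.mul (hsq.neg.div_const 2).exp
    refine this.congr_deriv ?_
    unfold wfun
    have h2 : m' / (2 * m t) = m' / (2 * (√(m t) * √(m t))) := by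
      rw [Real.mul_self_sqrt hm0.le]
    rw [h2]
    simp only [Pi.neg_apply]
    field_simp
    ring
  have := (((hs.div_const K).add hwd).log hsum).const_mul 2 |>.sub (hwd.log hw.ne')
  refine this.congr_deriv ?_
  rw [mul_div_cancel_left₀ _ hw.ne']
  rfl

lemma abs_potential_deriv_le {κ w σ σ' : ℝ} (hw : 0 < w) (hσ : 0 ≤ σ) :
    |2 * ((σ' + w * κ) / (σ + w)) - κ| ≤ |κ| + 2 * |σ'| / w := by
  have hs : 0 < σ + w := by positivity
  have e : 2 * ((σ' + w * κ) / (σ + w)) - κ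
      = κ * ((w - σ) / (σ + w)) + 2 * σ' / (σ + w) := by
    field_simp
    ring
  have h1 : |(w - σ) / (σ + w)| ≤ 1 := by
    rw [abs_div, abs_of_pos hs, div_le_one hs, abs_le]
    constructor <;> linarith
  have h2 : |2 * σ' / (σ + w)| ≤ 2 * |σ'| / w := by
    rw [abs_div, abs_of_pos hs, abs_mul, abs_two]
    gcongr
    linarith
  rw [e]
  refine (abs_add_le _ _).trans (add_le_add ?_ h2)
  rw [abs_mul]
  exact mul_le_of_le_one_right (abs_nonneg _) h1

/-- The differential inequality `|Φ'| ≤ F` near the boundary, with `α = ‖v_N‖`, `τ = ‖v_T‖`. -/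
lemma near_estimate {K m w α τ m' s' : ℝ} (hK : 16 ≤ K) (hm : 0 < m) (hm1 : m ≤ 1)
    (hw : √m / 2 ≤ w) (hα : |m'| = α) (hτ : 0 ≤ τ) (hs : |s'| ≤ α + τ) :
    |m' / (2 * m) - m' / (4 * √m)| + 2 * |s' / K| / w ≤ α / (2 * m) + τ / √m := by
  have hu : 0 < √m := Real.sqrt_pos.2 hm
  have hu1 : √m ≤ 1 := by
    rw [← Real.sqrt_one]
    exact Real.sqrt_le_sqrt hm1
  have hα0 : 0 ≤ α := hα ▸ abs_nonneg _
  have hmm : m = √m * √m := (Real.mul_self_sqrt hm.le).symm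
  have h1 : |m' / (2 * m) - m' / (4 * √m)| = α / (2 * m) - α / (4 * √m) := by
    have e : m' / (2 * m) - m' / (4 * √m) = m' * (1 / (2 * m) - 1 / (4 * √m)) := by ring
    have hnn : 0 ≤ 1 / (2 * m) - 1 / (4 * √m) := by
      rw [sub_nonneg]
      apply one_div_le_one_div_of_le (by positivity)
      nlinarith
    rw [e, abs_mul, hα, abs_of_nonneg hnn]
    ring
  have h2 : 2 * |s' / K| / w ≤ (α + τ) / (4 * √m) := by
    rw [abs_div, abs_of_pos (by linarith : (0:ℝ) < K)]
    calc 2 * (|s'| / K) / w ≤ 2 * ((α + τ) / 16) / (√m / 2) := by gcongr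
      _ = (α + τ) / (4 * √m) := by
        field_simp
        ring
  have h3 : τ / (4 * √m) ≤ τ / √m := by
    gcongr
    linarith
  rw [h1]
  calc _ ≤ α / (2 * m) - α / (4 * √m) + (α + τ) / (4 * √m) := by gcongr
    _ = α / (2 * m) + τ / (4 * √m) := by ring
    _ ≤ _ := by gcongr

section
variable {D : Set (Euc d)} {π : Euc d → Euc d} {ε c : ℝ}

set_option maxHeartbeats 1000000 in
/-- Along any admissible curve the potential varies by at most the `F`-length. -/
lemma potential_variation_le (hfr : IsCompact (frontier D)) (hc : 0 < c)
    (hε0 : 0 < ε) (hε1 : ε < 1)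
    (hδ : ∀ x ∈ D, 0 < infDist x (frontier D))
    (hπ : ∀ x ∈ D, π x ∈ frontier D ∧ dist x (π x) = infDist x (frontier D))
    (hπN : ∀ x ∈ D, infDist x (frontier D) ≤ ε →
      ∀ q ∈ frontier D, dist x q = infDist x (frontier D) → q = π x)
    {γ : ℝ → Euc d} (hγ : PiecewiseC1On γ 0 1) (hγD : ∀ t ∈ Icc (0:ℝ) 1, γ t ∈ D)
    {K : ℝ} (hK : 16 ≤ K) (hKc : 4 ≤ K * c * √ε) (z : Euc d) :
    |potential K ‖γ 1 - z‖ (min (infDist (γ 1) (frontier D)) ε)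
      - potential K ‖γ 0 - z‖ (min (infDist (γ 0) (frontier D)) ε)|
      ≤ ∫ t in (0:ℝ)..1, Fmet D π ε c (γ t) (deriv γ t) := by
  have hK0 : 0 < K := by linarith
  have hFint := intervalIntegrable_Fmet hfr hc hδ hπ hπN hγ hγD
  obtain ⟨Λ, hΛ⟩ := hγ.exists_lipschitzOnWith
  set s : ℝ → ℝ := fun t => ‖γ t - z‖ with hsdef
  set m : ℝ → ℝ := fun t => min (infDist (γ t) (frontier D)) ε with hmdef
  have hsL : LipschitzOnWith Λ s (Icc 0 1) := by
    refine LipschitzOnWith.of_dist_le_mul fun x hx y hy => ?_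
    refine le_trans ?_ (hΛ.dist_le_mul x hx y hy)
    rw [Real.dist_eq, dist_eq_norm]
    simpa using abs_norm_sub_norm_le (γ x - z) (γ y - z)
  have hmL : LipschitzOnWith Λ m (Icc 0 1) := by
    have h1 : LipschitzWith 1 (fun x : Euc d => min (infDist x (frontier D)) ε) :=
      (lipschitz_infDist_pt (frontier D)).min_const ε
    have := h1.comp_lipschitzOnWith hΛ
    rw [one_mul] at this
    exact this
  have hmpos : ∀ t ∈ Icc (0:ℝ) 1, 0 < m t := fun t ht => lt_min (hδ _ (hγD t ht)) hε0
  have hmε : ∀ t, m t ≤ ε := fun t => min_le_right _ _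
  obtain ⟨t₀, ht₀, hmin⟩ := isCompact_Icc.exists_isMinOn (nonempty_Icc.2 zero_le_one)
    hmL.continuousOn
  obtain ⟨t₁, ht₁, hmax⟩ := isCompact_Icc.exists_isMaxOn (nonempty_Icc.2 zero_le_one)
    hsL.continuousOn
  obtain ⟨C, hC⟩ := exists_lipschitzOnWith_potential (K := K) (a := m t₀) (b := ε) (S := s t₁)
    hK0 (hmpos t₀ ht₀)
  have hΦ : LipschitzOnWith (C * max Λ Λ) (fun t => potential K (s t) (m t)) (Icc 0 1) :=
    hC.comp (hsL.prodMk hmL)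
      fun t ht => ⟨⟨norm_nonneg _, hmax ht⟩, ⟨hmin ht, hmε t⟩⟩
  refine abs_sub_le_integral_of_abs_deriv_le (f := fun t => potential K (s t) (m t)) hΦ hFint ?_
  filter_upwards [ae_differentiableAt_of_lipschitzOnWith hΛ,
    ae_differentiableAt_of_lipschitzOnWith hsL, ae_differentiableAt_of_lipschitzOnWith hmL]
    with t hγt hst hmt ht
  specialize hγt ht
  specialize hst ht
  specialize hmt ht
  have htI : t ∈ Icc (0:ℝ) 1 := ⟨ht.1.le, ht.2.le⟩
  have hm0 := hmpos t htI
  have hw := wfun_pos hm0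
  have hs' : |deriv s t| ≤ ‖deriv γ t‖ := abs_deriv_norm_sub_le hγt hst
  have hs0 : 0 ≤ s t / K := div_nonneg (norm_nonneg _) hK0.le
  rw [(hasDerivAt_potential hK0 hst.hasDerivAt hmt.hasDerivAt (norm_nonneg _) hm0).deriv]
  refine (abs_potential_deriv_le hw hs0).trans ?_
  have hhalf : √(m t) / 2 ≤ wfun (m t) := half_sqrt_le_wfun ((hmε t).trans hε1.le)
  by_cases hcase : infDist (γ t) (frontier D) ≤ ε
  · obtain ⟨hp, hdist⟩ := hπ _ (hγD t htI)
    have hmeq : m t = infDist (γ t) (frontier D) := min_eq_left hcase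
    have hne : γ t ≠ π (γ t) := by
      intro h
      rw [← h, dist_self, ← hmeq] at hdist
      linarith
    have hm' : |deriv m t| = ‖vN (γ t) (π (γ t)) (deriv γ t)‖ := by
      rw [norm_vN hne, deriv_eq_of_touching hγt hmt hne
        (fun r => le_min infDist_nonneg hε0.le) (fun r => ?_) ?_, abs_neg]
      · rw [← dist_eq_norm, hdist, hmeq]
      · rw [← dist_eq_norm]
        exact (min_le_left _ _).trans (infDist_le_dist_of_mem hp)
    have := near_estimate (s' := deriv s t) hK hm0 ((hmε t).trans hε1.le) hhalf hm'
      (norm_nonneg (vT (γ t) (π (γ t)) (deriv γ t)))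
      (hs'.trans (norm_le_vN_add_vT _ _ _))
    simp only [Fmet, hcase, if_true]
    rwa [hmeq] at this ⊢
  · have hmeq : m t = ε := min_eq_right (not_le.1 hcase).le
    -- `m` attains its maximal possible value `ε` at `t`
    have hm' : deriv m t = 0 := by
      refine IsLocalMax.deriv_eq_zero (Eventually.of_forall fun r => ?_)
      rw [hmeq]
      exact hmε r
    have hu : 0 < √ε := Real.sqrt_pos.2 hε0
    simp only [Fmet, hcase, if_false, hm', zero_div, sub_self, abs_zero, zero_add]
    rw [hmeq] at hhalf ⊢
    rw [abs_div, abs_of_pos hK0]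
    calc 2 * (|deriv s t| / K) / wfun ε ≤ 2 * (‖deriv γ t‖ / K) / (√ε / 2) := by gcongr
      _ = 4 / (K * √ε) * ‖deriv γ t‖ := by
        field_simp
        ring
      _ ≤ c * ‖deriv γ t‖ := by
        gcongr
        rw [div_le_iff₀ (by positivity)]
        linarith

/-- Lower bound for the `F`-length of a curve, with the Euclidean distance of its end points in place
of the distance of their projections. -/
lemma exists_lower_bound (hfr : IsCompact (frontier D)) (hc : 0 < c)
    (hε0 : 0 < ε) (hε1 : ε < 1)
    (hδ : ∀ x ∈ D, 0 < infDist x (frontier D))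
    (hπ : ∀ x ∈ D, π x ∈ frontier D ∧ dist x (π x) = infDist x (frontier D))
    (hπN : ∀ x ∈ D, infDist x (frontier D) ≤ ε →
      ∀ q ∈ frontier D, dist x q = infDist x (frontier D) → q = π x)
    {Δ : ℝ} (hΔ : 1 ≤ Δ) (hδΔ : ∀ x ∈ D, infDist x (frontier D) ≤ Δ) :
    ∃ κ : ℝ, 0 < κ ∧ ∀ γ : ℝ → Euc d, PiecewiseC1On γ 0 1 → (∀ t ∈ Icc (0:ℝ) 1, γ t ∈ D) →
      2 * Real.log (κ * (‖γ 0 - γ 1‖ + max (hfun D (γ 0)) (hfun D (γ 1))))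
        - Real.log (hfun D (γ 0)) - Real.log (hfun D (γ 1))
        ≤ ∫ t in (0:ℝ)..1, Fmet D π ε c (γ t) (deriv γ t) := by
  have hu : 0 < √ε := Real.sqrt_pos.2 hε0
  set K : ℝ := max 16 (4 / (c * √ε)) with hKdef
  have hK : 16 ≤ K := le_max_left _ _
  have hKc : 4 ≤ K * c * √ε := by
    have : 4 / (c * √ε) ≤ K := le_max_right _ _
    rw [div_le_iff₀ (by positivity)] at this
    linarith
  have hK0 : 0 < K := by linarith
  have hΔ0 : 0 < Δ := by linarith
  set κ : ℝ := min (1 / K) (√(ε / Δ) / 2) with hκ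
  have hκ0 : 0 < κ := by positivity
  -- bounds for the modified height in terms of `h`
  have hwle : ∀ x, wfun (min (infDist x (frontier D)) ε) ≤ hfun D x := fun x =>
    (wfun_le_sqrt _).trans (Real.sqrt_le_sqrt (min_le_left _ _))
  have hlew : ∀ x ∈ D, κ * hfun D x ≤ wfun (min (infDist x (frontier D)) ε) := by
    intro x hx
    have h1 : ε / Δ * infDist x (frontier D) ≤ min (infDist x (frontier D)) ε := by
      have hp := hδ x hx
      have hq := hδΔ x hx
      refine le_min ?_ ?_
      · refine mul_le_of_le_one_left hp.le ?_
        rw [div_le_one hΔ0]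
        linarith
      · rw [div_mul_eq_mul_div, div_le_iff₀ hΔ0]
        gcongr
    have h2 : √(ε / Δ) * hfun D x ≤ √(min (infDist x (frontier D)) ε) := by
      rw [hfun, ← Real.sqrt_mul (by positivity)]
      exact Real.sqrt_le_sqrt h1
    calc κ * hfun D x ≤ √(ε / Δ) / 2 * hfun D x :=
          mul_le_mul_of_nonneg_right (min_le_right _ _) (Real.sqrt_nonneg _)
      _ ≤ √(min (infDist x (frontier D)) ε) / 2 := by linarith
      _ ≤ _ := half_sqrt_le_wfun ((min_le_right _ _).trans hε1.le)
  refine ⟨κ, hκ0, fun γ hγ hγD => ?_⟩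
  have hx := hγD 0 ⟨le_rfl, zero_le_one⟩
  have hy := hγD 1 ⟨zero_le_one, le_rfl⟩
  have key : ∀ p ∈ D, ∀ q ∈ D,
      2 * Real.log (κ * (‖p - q‖ + hfun D p)) - Real.log (hfun D q) - Real.log (hfun D p) ≤
      potential K ‖p - q‖ (min (infDist p (frontier D)) ε)
        - potential K ‖q - q‖ (min (infDist q (frontier D)) ε) := by
    intro p hp q hq
    have wp := wfun_pos (lt_min (hδ p hp) hε0)
    have wq := wfun_pos (lt_min (hδ q hq) hε0)
    have hpp : 0 < hfun D p := Real.sqrt_pos.2 (hδ p hp)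
    simp only [potential, sub_self, norm_zero, zero_div, zero_add]
    have l1 := Real.log_le_log wp (hwle p)
    have l2 := Real.log_le_log wq (hwle q)
    have l3 : Real.log (κ * (‖p - q‖ + hfun D p)) ≤
        Real.log (‖p - q‖ / K + wfun (min (infDist p (frontier D)) ε)) := by
      refine Real.log_le_log (by positivity) ?_
      rw [mul_add]
      refine add_le_add ?_ (hlew p hp)
      calc κ * ‖p - q‖ ≤ 1 / K * ‖p - q‖ := by
            gcongr
            exact min_le_left _ _
        _ = _ := by ring
    linarith
  have v0 := potential_variation_le hfr hc hε0 hε1 hδ hπ hπN hγ hγD hK hKc (γ 0)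
  have v1 := potential_variation_le hfr hc hε0 hε1 hδ hπ hπN hγ hγD hK hKc (γ 1)
  have k0 := key _ hx _ hy
  have k1 := key _ hy _ hx
  rw [abs_le] at v0 v1
  rcases max_choice (hfun D (γ 0)) (hfun D (γ 1)) with h | h <;> rw [h]
  · linarith [v1.1]
  · rw [norm_sub_rev] at k1 ⊢
    rw [norm_sub_rev] at k1
    have := v0.2
    linarith

end

/-! ### The normal field and interior tangent balls -/

section
variable {D U : Set (Euc d)} {u : Euc d → ℝ}

/-- The normalized gradient of a defining function `u`; on the boundary it is the outer unit
normal. -/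
def unormal (u : Euc d → ℝ) (y : Euc d) : Euc d := ‖gradient u y‖⁻¹ • gradient u y

lemma ball_infDist_frontier_subset (hD : IsOpen D) {x : Euc d} (hx : x ∈ D) :
    ball x (infDist x (frontier D)) ⊆ D := by
  rcases (infDist_nonneg (x := x) (s := frontier D)).eq_or_lt with h0 | h0
  · rw [← h0, ball_zero]
    exact empty_subset _
  refine (convex_ball x _).isPreconnected.subset_left_of_subset_union hD
    (isClosed_closure (s := D)).isOpen_compl ?_ ?_ ⟨x, mem_ball_self h0, hx⟩
  · exact disjoint_compl_right.mono_left subset_closure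
  · intro y hy
    by_contra hcon
    rw [mem_union, not_or, mem_compl_iff, not_not] at hcon
    have hyf : y ∈ frontier D := by
      rw [frontier, hD.interior_eq]
      exact ⟨hcon.2, hcon.1⟩
    have := infDist_le_dist_of_mem (x := x) hyf
    rw [mem_ball, dist_comm] at hy
    linarith

lemma gradient_ne_zero {y : Euc d} (h : fderiv ℝ u y ≠ 0) : gradient u y ≠ 0 := by
  intro h0
  apply h
  rw [← toDual_gradient, h0, map_zero]

lemma contDiffOn_gradient (hU : IsOpen U) (hu : ContDiffOn ℝ 2 u U) :
    ContDiffOn ℝ 1 (gradient u) U := by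
  have h1 : ContDiffOn ℝ 1 (fderiv ℝ u) U := hu.fderiv_of_isOpen hU (by norm_num)
  exact (InnerProductSpace.toDual ℝ (Euc d)).symm.contDiff.comp_contDiffOn h1

lemma norm_unormal {y : Euc d} (h : gradient u y ≠ 0) : ‖unormal u y‖ = 1 := by
  rw [unormal, norm_smul, norm_inv, norm_norm, inv_mul_cancel₀ (norm_ne_zero_iff.2 h)]

lemma norm_smul_unormal {y : Euc d} (h : gradient u y ≠ 0) :
    ‖gradient u y‖ • unormal u y = gradient u y := by
  rw [unormal, smul_smul, mul_inv_cancel₀ (norm_ne_zero_iff.2 h), one_smul]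

lemma exists_contDiffOn_unormal (hU : IsOpen U) (hfU : frontier D ⊆ U)
    (hu : ContDiffOn ℝ 2 u U) (hne : ∀ x ∈ frontier D, fderiv ℝ u x ≠ 0) :
    ∃ W, IsOpen W ∧ frontier D ⊆ W ∧ ContDiffOn ℝ 1 (unormal u) W := by
  have hg := contDiffOn_gradient hU hu
  refine ⟨U ∩ gradient u ⁻¹' {0}ᶜ, hg.continuousOn.isOpen_inter_preimage hU
    isOpen_compl_singleton, fun x hx => ⟨hfU hx, gradient_ne_zero (hne x hx)⟩, ?_⟩
  have hg' := hg.mono (inter_subset_left (t := gradient u ⁻¹' {0}ᶜ))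
  exact ((hg'.norm ℝ fun x hx => hx.2).inv fun x hx => norm_ne_zero_iff.2 hx.2).smul hg'

/-- An interior point lies on the inner normal at each of its nearest boundary points. -/
lemma eq_sub_smul_unormal (hD : IsOpen D) (hU : IsOpen U) (hfU : frontier D ⊆ U)
    (hu : ContDiffOn ℝ 2 u U) (hDU : D ∩ U = {x | x ∈ U ∧ u x < 0})
    (hf0 : frontier D = {x | x ∈ U ∧ u x = 0}) (hne : ∀ x ∈ frontier D, fderiv ℝ u x ≠ 0)
    {x p : Euc d} (hx : x ∈ D) (hp : p ∈ frontier D)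
    (hxp : dist x p = infDist x (frontier D)) (hpos : 0 < infDist x (frontier D)) :
    x = p - infDist x (frontier D) • unormal u p := by
  set δ := infDist x (frontier D) with hδ
  have hg := gradient_ne_zero (hne p hp)
  have hgp : 0 < ‖gradient u p‖ := norm_pos_iff.2 hg
  have hnp := norm_unormal hg
  have hnxp : ‖x - p‖ = δ := by rw [← dist_eq_norm, hxp]
  have hup : u p = 0 := by
    rw [hf0] at hp
    exact hp.2
  have hdiff : HasFDerivAt u (fderiv ℝ u p) p :=
    ((hu.contDiffAt (hU.mem_nhds (hfU hp))).differentiableAt (by norm_num)).hasFDerivAt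
  -- `u` decreases in every direction pointing into the ball `B(x, δ) ⊆ D`
  have hdir : ∀ v : Euc d, 0 < ⟪v, x - p⟫ → ⟪gradient u p, v⟫ ≤ 0 := by
    intro v hv
    rw [inner_gradient_left]
    have hline : HasDerivAt (fun t : ℝ => p + t • v) v 0 := by
      simpa using ((hasDerivAt_id (0:ℝ)).smul_const v).const_add p
    have hder : HasDerivAt (fun t : ℝ => u (p + t • v)) (fderiv ℝ u p v) 0 := by
      have h0 : HasFDerivAt u (fderiv ℝ u p) (p + (0:ℝ) • v) := by simpa using hdiff
      exact h0.comp_hasDerivAt 0 hline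
    have hslope := (hasDerivAt_iff_tendsto_slope.1 hder).mono_left
      (nhdsWithin_mono (0:ℝ) (show Ioi (0:ℝ) ⊆ {0}ᶜ from fun t ht => ne_of_gt ht))
    refine le_of_tendsto hslope ?_
    have hUev : ∀ᶠ t in 𝓝[>] (0:ℝ), p + t • v ∈ U := by
      refine hline.continuousAt.continuousWithinAt.eventually_mem (hU.mem_nhds ?_)
      simpa using hfU hp
    have hsmall : ∀ᶠ t in 𝓝[>] (0:ℝ), t * ‖v‖ ^ 2 < 2 * ⟪v, x - p⟫ := by
      have : Tendsto (fun t : ℝ => t * ‖v‖ ^ 2) (𝓝[>] 0) (𝓝 (0 * ‖v‖ ^ 2)) :=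
        (continuous_id.mul continuous_const).continuousAt.continuousWithinAt
      rw [zero_mul] at this
      exact this.eventually_lt_const (by linarith)
    filter_upwards [hUev, hsmall, self_mem_nhdsWithin] with t htU hts ht0
    have ht0' : 0 < t := ht0
    have hmem : p + t • v ∈ D := by
      apply ball_infDist_frontier_subset hD hx
      rw [mem_ball, dist_eq_norm, ← hδ]
      have e : p + t • v - x = t • v - (x - p) := by abel
      have : ‖t • v - (x - p)‖ ^ 2 < δ ^ 2 := by
        rw [norm_sub_sq_real, hnxp, norm_smul, inner_smul_left]
        simp only [Real.norm_eq_abs, mul_pow, sq_abs, conj_trivial]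
        nlinarith
      rw [e]
      exact lt_of_pow_lt_pow_left₀ 2 hpos.le this
    have hneg : u (p + t • v) < 0 := by
      have : p + t • v ∈ D ∩ U := ⟨hmem, htU⟩
      rw [hDU] at this
      exact this.2
    rw [slope_def_field]
    simp only [zero_smul, add_zero, hup, sub_zero]
    exact div_nonpos_of_nonpos_of_nonneg hneg.le ht0'.le
  -- testing against `δ n + (x - p)` gives the equality case of Cauchy-Schwarz
  have hin : ⟪unormal u p, x - p⟫ = -δ := by
    have hcs := abs_le.1 (abs_real_inner_le_norm (unormal u p) (x - p))
    rw [hnp, one_mul, hnxp] at hcs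
    rcases hcs.1.eq_or_lt with h | h
    · exact h.symm
    exfalso
    have hv := hdir (δ • unormal u p + (x - p)) (by
      rw [inner_add_left, inner_smul_left, real_inner_self_eq_norm_sq, hnxp]
      simp only [conj_trivial]
      nlinarith)
    rw [← norm_smul_unormal hg, inner_smul_left, inner_add_right, inner_smul_right,
      real_inner_self_eq_norm_sq, hnp] at hv
    simp only [conj_trivial] at hv
    have : 0 < ‖gradient u p‖ * (δ * 1 ^ 2 + ⟪unormal u p, x - p⟫) :=
      mul_pos hgp (by linarith)
    linarith
  have hz : ‖x - p + δ • unormal u p‖ ^ 2 = 0 := by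
    rw [norm_add_sq_real, hnxp, inner_smul_right, real_inner_comm, hin, norm_smul, hnp,
      Real.norm_eq_abs, mul_one, sq_abs]
    ring
  have hz' := norm_eq_zero.1 (pow_eq_zero_iff (two_ne_zero)|>.1 hz)
  rw [eq_sub_iff_add_eq, ← sub_eq_zero, ← hz']
  abel

/-- Uniform interior tangent balls. -/
lemma exists_interior_ball (hfr : IsCompact (frontier D)) (hU : IsOpen U) (hfU : frontier D ⊆ U)
    (hu : ContDiffOn ℝ 2 u U) (hDU : D ∩ U = {x | x ∈ U ∧ u x < 0})
    (hf0 : frontier D = {x | x ∈ U ∧ u x = 0}) (hne : ∀ x ∈ frontier D, fderiv ℝ u x ≠ 0) :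
    ∃ R₀ : ℝ, 0 < R₀ ∧ ∀ p ∈ frontier D, ∀ R : ℝ, 0 < R → R ≤ R₀ →
      ball (p - R • unormal u p) R ⊆ D := by
  refine hfr.induction_on (p := fun S => ∃ R₀ : ℝ, 0 < R₀ ∧ ∀ p ∈ S, ∀ R : ℝ, 0 < R → R ≤ R₀ →
      ball (p - R • unormal u p) R ⊆ D) ⟨1, one_pos, by simp⟩ ?_ ?_ ?_
  · rintro S T hST ⟨R₀, h0, h⟩
    exact ⟨R₀, h0, fun p hp => h p (hST hp)⟩
  · rintro S T ⟨R₁, h1, H1⟩ ⟨R₂, h2, H2⟩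
    refine ⟨min R₁ R₂, lt_min h1 h2, ?_⟩
    rintro p (hp | hp) R hR hRR
    · exact H1 p hp R hR (hRR.trans (min_le_left _ _))
    · exact H2 p hp R hR (hRR.trans (min_le_right _ _))
  intro ξ hξ
  have hξU := hU.mem_nhds (hfU hξ)
  have hdc : ContDiffAt ℝ 1 (fderiv ℝ u) ξ :=
    (hu.fderiv_of_isOpen hU (by norm_num)).contDiffAt hξU
  obtain ⟨K, T, hT, hK⟩ := hdc.exists_lipschitzOnWith
  have hgc : ContinuousAt (gradient u) ξ :=
    (contDiffOn_gradient hU hu).continuousOn.continuousAt hξU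
  have hgξ : 0 < ‖gradient u ξ‖ := norm_pos_iff.2 (gradient_ne_zero (hne ξ hξ))
  set m := ‖gradient u ξ‖ / 2 with hm
  have hm0 : 0 < m := by positivity
  have hgm : ∀ᶠ p in 𝓝 ξ, m < ‖gradient u p‖ :=
    hgc.norm.eventually_const_lt (by linarith)
  obtain ⟨r, hr, hball⟩ := Metric.mem_nhds_iff.1 (inter_mem (inter_mem hξU hT) hgm)
  refine ⟨ball ξ (r / 2) ∩ frontier D, inter_mem (mem_nhdsWithin_of_mem_nhds (ball_mem_nhds ξ (by positivity)))
    self_mem_nhdsWithin, min (r / 4) (m / (2 * (K + 1))),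
    by positivity, ?_⟩
  rintro p ⟨hpξ, hp⟩ R hR hRR y hy
  have hR1 : R ≤ r / 4 := hRR.trans (min_le_left _ _)
  have hR2 : R * (2 * (K + 1)) ≤ m := by
    have := hRR.trans (min_le_right _ _)
    rwa [le_div_iff₀ (by positivity)] at this
  have hg := gradient_ne_zero (hne p hp)
  have hnp := norm_unormal hg
  have hup : u p = 0 := by
    rw [hf0] at hp
    exact hp.2
  set w := y - p with hw
  rw [mem_ball, dist_eq_norm, show y - (p - R • unormal u p) = w + R • unormal u p by
    rw [hw]; abel] at hy
  have hsq : ‖w‖ ^ 2 + 2 * (R * ⟪unormal u p, w⟫) < 0 := by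
    have h1 : ‖w + R • unormal u p‖ ^ 2 < R ^ 2 := by gcongr
    rw [norm_add_sq_real, inner_smul_right, norm_smul, hnp, Real.norm_eq_abs, mul_one, sq_abs,
      real_inner_comm] at h1
    linarith
  have hw2 : ‖w‖ < 2 * R := by
    have := norm_sub_le (w + R • unormal u p) (R • unormal u p)
    rw [add_sub_cancel_right, norm_smul, hnp, Real.norm_eq_abs, abs_of_pos hR] at this
    linarith
  have hsub : closedBall p ‖w‖ ⊆ ball ξ r := by
    intro z hz
    rw [mem_closedBall] at hz
    rw [mem_ball] at hpξ ⊢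
    linarith [dist_triangle z p ξ]
  have hyB : y ∈ closedBall p ‖w‖ := by rw [mem_closedBall, dist_eq_norm]
  have hpB : p ∈ closedBall p ‖w‖ := mem_closedBall_self (norm_nonneg _)
  have htaylor : ‖u y - u p - fderiv ℝ u p (y - p)‖ ≤ (K * ‖w‖) * ‖y - p‖ := by
    refine (convex_closedBall p ‖w‖).norm_image_sub_le_of_norm_hasFDerivWithin_le'
      (f' := fderiv ℝ u) (fun z hz => ?_) (fun z hz => ?_) hpB hyB
    · exact ((hu.contDiffAt (hU.mem_nhds (hball (hsub hz)).1.1)).differentiableAt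
        (by norm_num)).hasFDerivAt.hasFDerivWithinAt
    · rw [← dist_eq_norm]
      refine (hK.dist_le_mul z (hball (hsub hz)).1.2 p (hball (hsub hpB)).1.2).trans ?_
      have := mem_closedBall.1 hz
      gcongr
  have hyU : y ∈ U := (hball (hsub hyB)).1.1
  have hpm : m < ‖gradient u p‖ := (hball (hsub hpB)).2
  have hlin : fderiv ℝ u p (y - p) = ‖gradient u p‖ * ⟪unormal u p, w⟫ := by
    rw [← inner_gradient_left (𝕜 := ℝ)]
    nth_rw 1 [← norm_smul_unormal hg]
    rw [inner_smul_left]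
    rfl
  have hmem : y ∈ {x | x ∈ U ∧ u x < 0} := by
    refine ⟨hyU, ?_⟩
    have h1 := (abs_le.1 htaylor).2
    rw [hup, hlin, ← hw] at h1
    have hinn : ⟪unormal u p, w⟫ < 0 := by
      have := sq_nonneg ‖w‖
      by_contra hc
      have : 0 ≤ R * ⟪unormal u p, w⟫ := mul_nonneg hR.le (not_lt.1 hc)
      linarith
    have h2 : ‖gradient u p‖ * ⟪unormal u p, w⟫ ≤ m * ⟪unormal u p, w⟫ :=
      mul_le_mul_of_nonpos_right hpm.le hinn.le
    have h3 : m * ⟪unormal u p, w⟫ ≤ R * (2 * (K + 1)) * ⟪unormal u p, w⟫ :=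
      mul_le_mul_of_nonpos_right hR2 hinn.le
    have hK0 : (0:ℝ) ≤ K := K.2
    have h4 : R * (2 * (K + 1)) * ⟪unormal u p, w⟫ < -((K + 1) * ‖w‖ ^ 2) := by
      nlinarith
    nlinarith [sq_nonneg ‖w‖]
  rw [← hDU] at hmem
  exact hmem.1

end

/-! ### Comparison of the intrinsic and the Euclidean distance on the boundary -/

section
variable {D U : Set (Euc d)} {u : Euc d → ℝ}

/-- A function dominated by a constant on the unit interval has integral at most that constant. -/
lemma integral_le_of_le_const {f : ℝ → ℝ} {C : ℝ} (hf : IntervalIntegrable f volume 0 1)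
    (h : ∀ t ∈ Ioo (0:ℝ) 1, f t ≤ C) : ∫ t in (0:ℝ)..1, f t ≤ C := by
  have := intervalIntegral.integral_mono_on_of_le_Ioo zero_le_one hf
    (intervalIntegrable_const (c := C)) h
  simpa using this

lemma intervalIntegrable_norm_deriv {γ : ℝ → Euc d} (hγ : PiecewiseC1On γ 0 1) :
    IntervalIntegrable (fun t => ‖deriv γ t‖) volume 0 1 := by
  obtain ⟨K, hK⟩ := hγ.exists_lipschitzOnWith
  rw [intervalIntegrable_iff_integrableOn_Ioo_of_le zero_le_one]
  refine Measure.integrableOn_of_bounded (M := (K : ℝ)) (by simp)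
    (measurable_deriv γ).norm.aestronglyMeasurable ?_
  filter_upwards [ae_restrict_mem measurableSet_Ioo] with t ht
  rw [norm_norm]
  exact norm_deriv_le_of_lipschitzOn (Icc_mem_nhds ht.1 ht.2) hK

lemma norm_smul_homogeneous : ∀ x v : Euc d, ∀ a : ℝ, 0 < a →
    (fun _ v : Euc d => ‖v‖) x (a • v) = a * (fun _ v : Euc d => ‖v‖) x v := by
  intro x v a ha
  simp [norm_smul, abs_of_pos ha]

/-- The inverse function theorem at a point where the derivative is the identity. -/
lemma exists_local_inverse {Ψ : Euc d → Euc d} {ξ₀ : Euc d} (hΨc : ContDiffAt ℝ 1 Ψ ξ₀)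
    (hΨd : HasFDerivAt Ψ (ContinuousLinearMap.id ℝ (Euc d)) ξ₀) :
    ∃ Φ : Euc d → Euc d, ContDiffAt ℝ 1 Φ (Ψ ξ₀) ∧ Φ (Ψ ξ₀) = ξ₀ ∧
      (∀ᶠ x in 𝓝 ξ₀, Φ (Ψ x) = x) ∧ ∀ᶠ y in 𝓝 (Ψ ξ₀), Ψ (Φ y) = y := by
  have hd' : HasFDerivAt Ψ ((ContinuousLinearEquiv.refl ℝ (Euc d) : Euc d ≃L[ℝ] Euc d) :
      Euc d →L[ℝ] Euc d) ξ₀ := hΨd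
  have hes := hΨc.mem_toOpenPartialHomeomorph_source hd' one_ne_zero
  have het := hΨc.image_mem_toOpenPartialHomeomorph_target hd' one_ne_zero
  refine ⟨hΨc.localInverse hd' one_ne_zero, hΨc.to_localInverse hd' one_ne_zero,
    hΨc.localInverse_apply_image hd' one_ne_zero, ?_, ?_⟩
  · filter_upwards [(hΨc.toOpenPartialHomeomorph Ψ hd' one_ne_zero).open_source.mem_nhds hes]
      with x hx
    exact (hΨc.toOpenPartialHomeomorph Ψ hd' one_ne_zero).left_inv hx
  · filter_upwards [(hΨc.toOpenPartialHomeomorph Ψ hd' one_ne_zero).open_target.mem_nhds het]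
      with x hx
    exact (hΨc.toOpenPartialHomeomorph Ψ hd' one_ne_zero).right_inv hx

/-- A map straightening the level sets of `u` near a point with nonzero gradient `a`: the linear
function `⟪a, · - ξ₀⟫` of the image is `u`. -/
lemma exists_straightening (hU : IsOpen U) (hu : ContDiffOn ℝ 2 u U) {ξ₀ : Euc d} (hξU : ξ₀ ∈ U)
    (hg : gradient u ξ₀ ≠ 0) :
    ∃ Ψ : Euc d → Euc d, (∀ x, ⟪gradient u ξ₀, Ψ x - ξ₀⟫ = u x) ∧ ContDiffAt ℝ 1 Ψ ξ₀ ∧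
      HasFDerivAt Ψ (ContinuousLinearMap.id ℝ (Euc d)) ξ₀ := by
  set a := gradient u ξ₀ with ha
  have hA : 0 < ‖a‖ ^ 2 := by
    have := norm_pos_iff.2 hg
    positivity
  let Ψ : Euc d → Euc d := fun x => x + ((u x - ⟪a, x - ξ₀⟫) / ‖a‖ ^ 2) • a
  have hΨin : ∀ x, ⟪a, Ψ x - ξ₀⟫ = u x := by
    intro x
    have : Ψ x - ξ₀ = (x - ξ₀) + ((u x - ⟪a, x - ξ₀⟫) / ‖a‖ ^ 2) • a := by
      simp only [Ψ]
      abel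
    rw [this, inner_add_right, inner_smul_right, real_inner_self_eq_norm_sq,
      div_mul_cancel₀ _ hA.ne']
    ring
  have hΨc : ContDiffAt ℝ 1 Ψ ξ₀ := by
    have huc : ContDiffAt ℝ 1 u ξ₀ :=
      (hu.contDiffAt (hU.mem_nhds hξU)).of_le (by norm_num)
    have hin : ContDiffAt ℝ 1 (fun x : Euc d => ⟪a, x - ξ₀⟫) ξ₀ :=
      contDiffAt_const.inner ℝ (contDiffAt_id.sub contDiffAt_const)
    exact contDiffAt_id.add (((huc.sub hin).div_const _).smul contDiffAt_const)
  have hΨd : HasFDerivAt Ψ (ContinuousLinearMap.id ℝ (Euc d)) ξ₀ := by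
    have hud : HasFDerivAt u (fderiv ℝ u ξ₀) ξ₀ :=
      ((hu.contDiffAt (hU.mem_nhds hξU)).differentiableAt (by norm_num)).hasFDerivAt
    have hin : HasFDerivAt (fun x : Euc d => ⟪a, x - ξ₀⟫) (innerSL ℝ a) ξ₀ :=
      (innerSL ℝ a).hasFDerivAt.comp ξ₀ ((hasFDerivAt_id ξ₀).sub_const ξ₀)
    have hdiff : HasFDerivAt (fun x => (u x - ⟪a, x - ξ₀⟫) / ‖a‖ ^ 2)
        (0 : Euc d →L[ℝ] ℝ) ξ₀ := by
      have h := (hud.sub hin).mul_const (‖a‖ ^ 2)⁻¹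
      have e : (‖a‖ ^ 2)⁻¹ • (fderiv ℝ u ξ₀ - innerSL ℝ a) = 0 := by
        ext v
        simp [ha, inner_gradient_left]
      rw [e] at h
      simp only [div_eq_mul_inv]
      exact h
    have h := (hasFDerivAt_id ξ₀).add (hdiff.smul_const a)
    refine h.congr_fderiv ?_
    ext v
    simp
  exact ⟨Ψ, hΨin, hΨc, hΨd⟩

/-- Near a boundary point the boundary is the image of a piece of a hyperplane under a bi-Lipschitz
`C¹` diffeomorphism, so nearby boundary points are joined by boundary curves of comparable length. -/
lemma exists_conn_frontier_local (hU : IsOpen U)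
    (hu : ContDiffOn ℝ 2 u U)
    (hf0 : frontier D = {x | x ∈ U ∧ u x = 0}) (hne : ∀ x ∈ frontier D, fderiv ℝ u x ≠ 0)
    {ξ₀ : Euc d} (hξ₀ : ξ₀ ∈ frontier D) :
    ∃ V ∈ 𝓝 ξ₀, ∃ C : ℝ, 0 ≤ C ∧ ∀ ξ ∈ V ∩ frontier D, ∀ η ∈ V ∩ frontier D,
      Conn (frontier D) (fun _ v => ‖v‖) ξ η (C * ‖ξ - η‖) := by
  have hξU : ξ₀ ∈ U := by
    rw [hf0] at hξ₀
    exact hξ₀.1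
  obtain ⟨Ψ, hΨin, hΨc, hΨd⟩ :=
    exists_straightening hU hu hξU (gradient_ne_zero (hne ξ₀ hξ₀))
  obtain ⟨Φ, hsym, hsym0, hleft, hright⟩ := exists_local_inverse hΨc hΨd
  obtain ⟨K, T, hT, hK⟩ := hsym.exists_lipschitzOnWith
  obtain ⟨K', T', hT', hK'⟩ := hΨc.exists_lipschitzOnWith
  have hSc := hsym.eventually (by simp)
  have hpre : Φ ⁻¹' U ∈ 𝓝 (Ψ ξ₀) := by
    refine hsym.continuousAt.preimage_mem_nhds ?_
    rw [hsym0]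
    exact hU.mem_nhds hξU
  obtain ⟨r, hr, hball⟩ := Metric.mem_nhds_iff.1
    (inter_mem (inter_mem hright hT) (inter_mem hSc hpre))
  have hV : Ψ ⁻¹' ball (Ψ ξ₀) r ∈ 𝓝 ξ₀ :=
    hΨc.continuousAt.preimage_mem_nhds (ball_mem_nhds _ hr)
  refine ⟨(Ψ ⁻¹' ball (Ψ ξ₀) r ∩ {x | Φ (Ψ x) = x}) ∩ T',
    inter_mem (inter_mem hV hleft) hT', K * K', by positivity, ?_⟩
  rintro ξ ⟨⟨⟨hξr, hξs⟩, hξT⟩, hξf⟩ η ⟨⟨⟨hηr, hηs⟩, hηT⟩, hηf⟩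
  have hu0 : ∀ x ∈ frontier D, u x = 0 := by
    intro x hx
    rw [hf0] at hx
    exact hx.2
  let z : ℝ → Euc d := fun t => Ψ ξ + t • (Ψ η - Ψ ξ)
  have hξr' : Ψ ξ ∈ ball (Ψ ξ₀) r := hξr
  have hηr' : Ψ η ∈ ball (Ψ ξ₀) r := hηr
  have hz : ∀ t ∈ Icc (0:ℝ) 1, z t ∈ ball (Ψ ξ₀) r := by
    intro t ht
    exact (convex_ball (Ψ ξ₀) r).add_smul_sub_mem hξr' hηr' ht
  have hzc : ContDiff ℝ 1 z := contDiff_const.add (contDiff_id.smul contDiff_const)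
  have hzL : LipschitzWith ‖Ψ η - Ψ ξ‖₊ z := by
    refine LipschitzWith.of_dist_le_mul fun s t => ?_
    rw [dist_eq_norm, show z s - z t = (s - t) • (Ψ η - Ψ ξ) by simp only [z]; module, norm_smul,
      mul_comm, coe_nnnorm, Real.dist_eq, Real.norm_eq_abs]
  have hzin : ∀ t, ⟪gradient u ξ₀, z t - ξ₀⟫ = 0 := by
    intro t
    have h1 : ⟪gradient u ξ₀, Ψ ξ - ξ₀⟫ = 0 := by rw [hΨin, hu0 ξ hξf]
    have h2 : ⟪gradient u ξ₀, Ψ η - ξ₀⟫ = 0 := by rw [hΨin, hu0 η hηf]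
    have h3 : z t - ξ₀ = (1 - t) • (Ψ ξ - ξ₀) + t • (Ψ η - ξ₀) := by
      simp only [z]
      module
    rw [h3, inner_add_right, inner_smul_right, inner_smul_right, h1, h2]
    ring
  have hσc : ContDiffOn ℝ 1 (fun t => Φ (z t)) (Icc 0 1) := by
    intro t ht
    have h1 : ContDiffAt ℝ 1 Φ (z t) := (hball (hz t ht)).2.1
    exact (h1.comp t hzc.contDiffAt).contDiffWithinAt
  have hσp := piecewiseC1On_of_contDiffOn zero_le_one hσc
  have hσL : LipschitzOnWith (K * ‖Ψ η - Ψ ξ‖₊) (fun t => Φ (z t)) (Icc 0 1) :=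
    hK.comp hzL.lipschitzOnWith fun t ht => (hball (hz t ht)).1.2
  have hFint := intervalIntegrable_norm_deriv hσp
  refine ⟨fun t => Φ (z t), hσp, fun t ht => ?_, ?_, ?_, hFint, ?_⟩
  · rw [hf0]
    refine ⟨(hball (hz t ht)).2.2, ?_⟩
    have : Ψ (Φ (z t)) = z t := (hball (hz t ht)).1.1
    rw [← hΨin, this, hzin]
  · simp only [z, zero_smul, add_zero]
    exact hξs
  · simp only [z, one_smul, add_sub_cancel]
    exact hηs
  · refine integral_le_of_le_const hFint fun t ht => ?_
    refine (norm_deriv_le_of_lipschitzOn (Icc_mem_nhds ht.1 ht.2) hσL).trans ?_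
    have := hK'.dist_le_mul ξ hξT η hηT
    rw [dist_eq_norm, dist_eq_norm, norm_sub_rev] at this
    rw [NNReal.coe_mul, coe_nnnorm, mul_assoc]
    gcongr

/-- The boundary is a chord-arc set: this is where connectedness of the boundary is needed. -/
lemma exists_conn_frontier (hfr : IsCompact (frontier D)) (hfc : IsConnected (frontier D))
    (hU : IsOpen U) (hu : ContDiffOn ℝ 2 u U)
    (hf0 : frontier D = {x | x ∈ U ∧ u x = 0}) (hne : ∀ x ∈ frontier D, fderiv ℝ u x ≠ 0) :
    ∃ C : ℝ, 0 ≤ C ∧ ∀ ξ ∈ frontier D, ∀ η ∈ frontier D,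
      Conn (frontier D) (fun _ v => ‖v‖) ξ η (C * ‖ξ - η‖) := by
  have hloc := fun ξ (hξ : ξ ∈ frontier D) => exists_conn_frontier_local hU hu hf0 hne hξ
  obtain ⟨M, hM⟩ := exists_conn_bound (S := frontier D) (G := fun _ v => ‖v‖)
    norm_smul_homogeneous hfc.isPreconnected
    (fun ξ hξ => by
      obtain ⟨V, hV, C, hC, h⟩ := hloc ξ hξ
      refine ⟨(V ∩ ball ξ 1) ∩ frontier D, inter_mem (mem_nhdsWithin_of_mem_nhds
        (inter_mem hV (ball_mem_nhds ξ one_pos))) self_mem_nhdsWithin, C * 2, ?_⟩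
      rintro y ⟨⟨hy, hy1⟩, hyf⟩ z ⟨⟨hz, hz1⟩, hzf⟩
      refine (h y ⟨hy, hyf⟩ z ⟨hz, hzf⟩).mono ?_
      gcongr
      rw [mem_ball] at hy1 hz1
      rw [← dist_eq_norm]
      linarith [dist_triangle_right y z ξ]) hfr subset_rfl
  have hprod : ∃ C : ℝ, 0 ≤ C ∧ ∀ q ∈ frontier D ×ˢ frontier D, q ∈ frontier D ×ˢ frontier D →
      Conn (frontier D) (fun _ v => ‖v‖) q.1 q.2 (C * ‖q.1 - q.2‖) := by
    refine (hfr.prod hfr).induction_on (p := fun S => ∃ C : ℝ, 0 ≤ C ∧ ∀ q ∈ S,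
      q ∈ frontier D ×ˢ frontier D → Conn (frontier D) (fun _ v => ‖v‖) q.1 q.2
        (C * ‖q.1 - q.2‖)) ⟨0, le_rfl, by simp⟩ ?_ ?_ ?_
    · rintro S T hST ⟨C, hC, h⟩
      exact ⟨C, hC, fun q hq => h q (hST hq)⟩
    · rintro S T ⟨C₁, h1, H1⟩ ⟨C₂, h2, H2⟩
      refine ⟨max C₁ C₂, le_max_of_le_left h1, ?_⟩
      rintro q (hq | hq) hqf
      · refine (H1 q hq hqf).mono ?_
        gcongr
        exact le_max_left _ _
      · refine (H2 q hq hqf).mono ?_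
        gcongr
        exact le_max_right _ _
    · rintro ⟨ξ, η⟩ ⟨hξ, hη⟩
      simp only at hξ hη
      by_cases hne' : ξ = η
      · subst hne'
        obtain ⟨V, hV, C, hC, h⟩ := hloc ξ hξ
        exact ⟨V ×ˢ V, mem_nhdsWithin_of_mem_nhds (prod_mem_nhds hV hV), C, hC,
          fun q hq hqf => h q.1 ⟨hq.1, hqf.1⟩ q.2 ⟨hq.2, hqf.2⟩⟩
      · have hpos : 0 < ‖ξ - η‖ := norm_pos_iff.2 (sub_ne_zero.2 hne')
        have hcont : ContinuousAt (fun q : Euc d × Euc d => ‖q.1 - q.2‖) (ξ, η) := by fun_prop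
        have hev : ∀ᶠ q in 𝓝 (ξ, η), ‖ξ - η‖ / 2 < ‖q.1 - q.2‖ :=
          hcont.eventually_const_lt (by simp only; linarith)
        refine ⟨_, mem_nhdsWithin_of_mem_nhds hev, |M| / (‖ξ - η‖ / 2), by positivity,
          fun q hq hqf => (hM q.1 hqf.1 q.2 hqf.2).mono ?_⟩
        have hq' : ‖ξ - η‖ / 2 < ‖q.1 - q.2‖ := hq
        rw [div_mul_eq_mul_div, le_div_iff₀ (by positivity)]
        calc M * (‖ξ - η‖ / 2) ≤ |M| * (‖ξ - η‖ / 2) := by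
              gcongr
              exact le_abs_self M
          _ ≤ _ := by gcongr
  obtain ⟨C, hC, h⟩ := hprod
  exact ⟨C, hC, fun ξ hξ η hη => h (ξ, η) ⟨hξ, hη⟩ ⟨hξ, hη⟩⟩

lemma norm_sub_le_integral {α : ℝ → Euc d} (hα : PiecewiseC1On α 0 1) :
    ‖α 0 - α 1‖ ≤ ∫ t in (0:ℝ)..1, ‖deriv α t‖ := by
  obtain ⟨K, hK⟩ := hα.exists_lipschitzOnWith
  have hs : LipschitzOnWith K (fun t => ‖α t - α 0‖) (Icc 0 1) := by
    refine LipschitzOnWith.of_dist_le_mul fun x hx y hy => ?_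
    refine le_trans ?_ (hK.dist_le_mul x hx y hy)
    rw [Real.dist_eq, dist_eq_norm]
    simpa using abs_norm_sub_norm_le (α x - α 0) (α y - α 0)
  have := abs_sub_le_integral_of_abs_deriv_le hs (intervalIntegrable_norm_deriv hα) (by
    filter_upwards [ae_differentiableAt_of_lipschitzOnWith hK,
      ae_differentiableAt_of_lipschitzOnWith hs] with t h1 h2 ht
    exact abs_deriv_norm_sub_le (h1 ht) (h2 ht))
  simpa [norm_sub_rev] using this

lemma bdist_le_of_conn {ξ η : Euc d} {L : ℝ} (h : Conn (frontier D) (fun _ v => ‖v‖) ξ η L) :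
    bdist D ξ η ≤ L := by
  obtain ⟨α, h1, h2, h3, h4, -, h6⟩ := h
  rw [bdist]
  refine le_trans (csInf_le ?_ ?_) h6
  · refine ⟨0, ?_⟩
    rintro L ⟨β, -, -, -, -, rfl⟩
    exact intervalIntegral.integral_nonneg zero_le_one fun t _ => norm_nonneg _
  · exact ⟨α, h1, h2, h3, h4, rfl⟩

lemma norm_sub_le_bdist {ξ η : Euc d} {L : ℝ} (h : Conn (frontier D) (fun _ v => ‖v‖) ξ η L) :
    ‖ξ - η‖ ≤ bdist D ξ η := by
  obtain ⟨α, h1, h2, h3, h4, -, h6⟩ := h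
  rw [bdist]
  refine le_csInf ⟨_, α, h1, h2, h3, h4, rfl⟩ ?_
  rintro L ⟨β, hβ, -, rfl, rfl, rfl⟩
  exact norm_sub_le_integral hβ

end

/-! ### Short curves for the filling metric -/

/-- The standing geometric data: `n` is a `C¹` extension of the outer unit normal field, with
derivative bounded by `L` on the boundary; `R` is a radius of interior tangent balls; and `C` is a
chord-arc constant of the boundary. -/
structure Collar (D : Set (Euc d)) (π n : Euc d → Euc d) (ε c R L C : ℝ) : Prop where
  isOpen : IsOpen D
  conn : IsPreconnected D
  bdd : Bornology.IsBounded D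
  compact : IsCompact (frontier D)
  nonempty : (frontier D).Nonempty
  hc : 0 < c
  hδ : ∀ x ∈ D, 0 < infDist x (frontier D)
  hπ : ∀ x ∈ D, π x ∈ frontier D ∧ dist x (π x) = infDist x (frontier D)
  hπN : ∀ x ∈ D, infDist x (frontier D) ≤ ε →
      ∀ q ∈ frontier D, dist x q = infDist x (frontier D) → q = π x
  hR : 0 < R
  hRε : R ≤ ε
  hL : 0 ≤ L
  hC : 0 ≤ C
  norm_normal : ∀ p ∈ frontier D, ‖n p‖ = 1
  smooth : ∃ W, IsOpen W ∧ frontier D ⊆ W ∧ ContDiffOn ℝ 1 n W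
  norm_fderiv : ∀ p ∈ frontier D, ‖fderiv ℝ n p‖ ≤ L
  ball : ∀ p ∈ frontier D, ∀ s : ℝ, 0 < s → s ≤ R → ball (p - s • n p) s ⊆ D
  foot : ∀ x ∈ D, x = π x - infDist x (frontier D) • n (π x)
  chordArc : ∀ ξ ∈ frontier D, ∀ η ∈ frontier D,
      Conn (frontier D) (fun _ v => ‖v‖) ξ η (C * ‖ξ - η‖)

namespace Collar
variable {D : Set (Euc d)} {π n : Euc d → Euc d} {ε c R L C : ℝ}

lemma push_mem (H : Collar D π n ε c R L C) {p : Euc d} (hp : p ∈ frontier D) {s : ℝ}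
    (hs : 0 < s) (hsR : s ≤ R) : p - s • n p ∈ D :=
  H.ball p hp s hs hsR (mem_ball_self hs)

lemma dist_push (H : Collar D π n ε c R L C) {p : Euc d} (hp : p ∈ frontier D) {s : ℝ}
    (hs : 0 < s) : dist (p - s • n p) p = s := by
  rw [dist_eq_norm, sub_sub_cancel_left, norm_neg, norm_smul, H.norm_normal p hp, mul_one,
    Real.norm_eq_abs, abs_of_pos hs]

lemma infDist_push (H : Collar D π n ε c R L C) {p : Euc d} (hp : p ∈ frontier D) {s : ℝ}
    (hs : 0 < s) (hsR : s ≤ R) : infDist (p - s • n p) (frontier D) = s := by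
  refine le_antisymm ((infDist_le_dist_of_mem hp).trans (H.dist_push hp hs).le) ?_
  rw [le_infDist H.nonempty]
  intro q hq
  by_contra hcon
  have hqD : q ∈ D := H.ball p hp s hs hsR (by rw [mem_ball, dist_comm]; exact not_le.1 hcon)
  exact (disjoint_frontier_iff_isOpen.2 H.isOpen).le_bot ⟨hq, hqD⟩

lemma proj_push (H : Collar D π n ε c R L C) {p : Euc d} (hp : p ∈ frontier D) {s : ℝ}
    (hs : 0 < s) (hsR : s ≤ R) : π (p - s • n p) = p := by
  have h := H.infDist_push hp hs hsR
  refine (H.hπN _ (H.push_mem hp hs hsR) ?_ p hp ?_).symm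
  · rw [h]
    exact hsR.trans H.hRε
  · rw [h, H.dist_push hp hs]

lemma nvec_push (H : Collar D π n ε c R L C) {p : Euc d} (hp : p ∈ frontier D) {s : ℝ}
    (hs : 0 < s) : nvec (p - s • n p) p = n p := by
  rw [nvec, sub_sub_cancel, norm_smul, H.norm_normal p hp, mul_one, Real.norm_eq_abs,
    abs_of_pos hs, smul_smul, inv_mul_cancel₀ hs.ne', one_smul]

/-- Moving along a normal costs half the logarithm of the ratio of the boundary distances. -/
lemma conn_vertical (H : Collar D π n ε c R L C) {p : Euc d} (hp : p ∈ frontier D) {a b : ℝ}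
    (ha : 0 < a) (haR : a ≤ R) (hb : 0 < b) (hbR : b ≤ R) :
    Conn D (Fmet D π ε c) (p - a • n p) (p - b • n p) (|Real.log b - Real.log a| / 2) := by
  let h : ℝ → ℝ := fun t => a + t * (b - a)
  have hh : ∀ t ∈ Icc (0:ℝ) 1, 0 < h t ∧ h t ≤ R := by
    intro t ht
    have := (convex_Ioc (0:ℝ) R).add_smul_sub_mem ⟨ha, haR⟩ ⟨hb, hbR⟩ ht
    simpa [h] using this
  have hhd : ∀ t, HasDerivAt h (b - a) t := fun t => by
    have := ((hasDerivAt_id t).mul_const (b - a)).const_add a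
    rw [one_mul] at this
    exact this
  let γ : ℝ → Euc d := fun t => p - h t • n p
  have hγd : ∀ t, HasDerivAt γ (-((b - a) • n p)) t := fun t =>
    ((hhd t).smul_const (n p)).const_sub p
  have hγc : ContDiff ℝ 1 γ :=
    contDiff_const.sub ((contDiff_const.add (contDiff_id.mul contDiff_const)).smul contDiff_const)
  have hγp : PiecewiseC1On γ 0 1 := piecewiseC1On_of_contDiffOn zero_le_one hγc.contDiffOn
  have hγD : ∀ t ∈ Icc (0:ℝ) 1, γ t ∈ D := fun t ht => H.push_mem hp (hh t ht).1 (hh t ht).2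
  have hFint := intervalIntegrable_Fmet H.compact H.hc H.hδ H.hπ H.hπN hγp hγD
  refine ⟨γ, hγp, hγD, by simp [γ, h], by simp [γ, h], hFint, ?_⟩
  have hF : ∀ t ∈ Icc (0:ℝ) 1, Fmet D π ε c (γ t) (deriv γ t) = |b - a| / (2 * h t) := by
    intro t ht
    obtain ⟨h0, hR⟩ := hh t ht
    have e1 : infDist (γ t) (frontier D) = h t := H.infDist_push hp h0 hR
    have e2 : π (γ t) = p := H.proj_push hp h0 hR
    have e3 : nvec (γ t) p = n p := H.nvec_push hp h0
    have e4 : vN (γ t) p (-((b - a) • n p)) = -((b - a) • n p) := by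
      rw [vN, e3, inner_neg_left, inner_smul_left, real_inner_self_eq_norm_sq,
        H.norm_normal p hp]
      simp only [conj_trivial, one_pow, mul_one, neg_smul]
    rw [Fmet, e1, if_pos (hR.trans H.hRε), e2, (hγd t).deriv, vT, e4, sub_self, norm_zero,
      zero_div, add_zero, norm_neg, norm_smul, H.norm_normal p hp, mul_one, Real.norm_eq_abs]
  have hlog : ∀ t ∈ uIcc (0:ℝ) 1,
      HasDerivAt (fun t => Real.log (h t) / 2) ((b - a) / (2 * h t)) t := by
    intro t ht
    rw [uIcc_of_le zero_le_one] at ht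
    have := (((hhd t).log (hh t ht).1.ne').div_const 2)
    refine this.congr_deriv ?_
    rw [div_div, mul_comm]
  have hci : IntervalIntegrable (fun t => (b - a) / (2 * h t)) volume 0 1 := by
    refine ContinuousOn.intervalIntegrable ?_
    rw [uIcc_of_le zero_le_one]
    refine continuousOn_const.div ?_ fun t ht => (mul_pos two_pos (hh t ht).1).ne'
    exact (continuous_const.mul (continuous_const.add
      (continuous_id.mul continuous_const))).continuousOn
  have hval := intervalIntegral.integral_eq_sub_of_hasDerivAt hlog hci
  have h1 : h 1 = b := by simp [h]
  have h0 : h 0 = a := by simp [h]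
  rw [h1, h0, ← sub_div] at hval
  have hcongr : ∫ t in (0:ℝ)..1, Fmet D π ε c (γ t) (deriv γ t) =
      ∫ t in (0:ℝ)..1, |b - a| / (2 * h t) := by
    refine intervalIntegral.integral_congr fun t ht => ?_
    rw [uIcc_of_le zero_le_one] at ht
    exact hF t ht
  rw [hcongr]
  rcases le_total a b with hab | hab
  · rw [abs_of_nonneg (sub_nonneg.2 hab), hval]
    gcongr
    exact le_abs_self _
  · rw [abs_of_nonpos (sub_nonpos.2 hab)]
    simp only [neg_div]
    rw [intervalIntegral.integral_neg, hval, ← neg_div]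
    gcongr
    exact neg_le_abs _

/-- Moving parallel to the boundary at distance `s`. -/
lemma conn_tangential (H : Collar D π n ε c R L C) {p q : Euc d} (hp : p ∈ frontier D)
    (hq : q ∈ frontier D) {s : ℝ} (hs : 0 < s) (hsR : s ≤ R) :
    Conn D (Fmet D π ε c) (p - s • n p) (q - s • n q)
      ((1 + s * L) / √s * (C * ‖p - q‖)) := by
  obtain ⟨α, hα, hαf, rfl, rfl, hαi, hαL⟩ := H.chordArc p hp q hq
  obtain ⟨W, hW, hfW, hnW⟩ := H.smooth
  let γ : ℝ → Euc d := fun t => α t - s • n (α t)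
  have hγp : PiecewiseC1On γ 0 1 :=
    hα.comp_contDiffOn (f := fun y => y - s • n y) (W := W)
      (contDiffOn_id.sub (hnW.const_smul s)) fun t ht => hfW (hαf t ht)
  have hγD : ∀ t ∈ Icc (0:ℝ) 1, γ t ∈ D := fun t ht => H.push_mem (hαf t ht) hs hsR
  have hFint := intervalIntegrable_Fmet H.compact H.hc H.hδ H.hπ H.hπN hγp hγD
  have hconst : ∀ t ∈ Icc (0:ℝ) 1, infDist (γ t) (frontier D) = s := fun t ht =>
    H.infDist_push (hαf t ht) hs hsR
  refine ⟨γ, hγp, hγD, rfl, rfl, hFint, ?_⟩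
  have hsq : 0 < √s := Real.sqrt_pos.2 hs
  have hfac : 0 ≤ (1 + s * L) / √s := by
    have := H.hL
    positivity
  have hpt : ∀ᵐ t, t ∈ Ioo (0:ℝ) 1 →
      Fmet D π ε c (γ t) (deriv γ t) ≤ (1 + s * L) / √s * ‖deriv α t‖ := by
    obtain ⟨K, hK⟩ := hα.exists_lipschitzOnWith
    filter_upwards [ae_differentiableAt_of_lipschitzOnWith hK] with t hαt ht
    specialize hαt ht
    have htI : t ∈ Icc (0:ℝ) 1 := ⟨ht.1.le, ht.2.le⟩
    have hmem := hαf t htI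
    have hnd : HasFDerivAt n (fderiv ℝ n (α t)) (α t) :=
      ((hnW.contDiffAt (hW.mem_nhds (hfW hmem))).differentiableAt one_ne_zero).hasFDerivAt
    have hγd : HasDerivAt γ (deriv α t - s • fderiv ℝ n (α t) (deriv α t)) t :=
      hαt.hasDerivAt.sub ((hnd.comp_hasDerivAt t hαt.hasDerivAt).const_smul s)
    have hπt : π (γ t) = α t := H.proj_push hmem hs hsR
    have hdt : dist (γ t) (α t) = s := H.dist_push hmem hs
    have hne : γ t ≠ α t := by
      intro h
      rw [h, dist_self] at hdt
      linarith
    -- the boundary distance is constant along `γ`, so its velocity has no normal component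
    have hloc : (fun r => infDist (γ r) (frontier D)) =ᶠ[𝓝 t] fun _ => s := by
      filter_upwards [Icc_mem_nhds ht.1 ht.2] with r hr
      exact hconst r hr
    have htouch := deriv_eq_of_touching (φ := fun r => infDist (γ r) (frontier D))
      hγd.differentiableAt ((differentiableAt_const s).congr_of_eventuallyEq hloc) hne
      (fun r => infDist_nonneg)
      (fun r => by
        rw [← dist_eq_norm]
        exact infDist_le_dist_of_mem hmem)
      (by
        rw [← dist_eq_norm, hdt]
        exact hconst t htI)
    rw [hloc.deriv_eq, deriv_const] at htouch
    have hvN : vN (γ t) (α t) (deriv γ t) = 0 := by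
      rw [vN, neg_eq_zero.1 htouch.symm, zero_smul]
    rw [Fmet, hconst t htI, if_pos (hsR.trans H.hRε), hπt, vT, hvN, norm_zero, zero_div, zero_add,
      sub_zero, hγd.deriv, div_mul_eq_mul_div]
    gcongr
    calc ‖deriv α t - s • fderiv ℝ n (α t) (deriv α t)‖
        ≤ ‖deriv α t‖ + ‖s • fderiv ℝ n (α t) (deriv α t)‖ := norm_sub_le _ _
      _ ≤ ‖deriv α t‖ + s * (L * ‖deriv α t‖) := by
        rw [norm_smul, Real.norm_eq_abs, abs_of_pos hs]
        gcongr
        exact (ContinuousLinearMap.le_opNorm _ _).trans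
          (mul_le_mul_of_nonneg_right (H.norm_fderiv _ hmem) (norm_nonneg _))
      _ = (1 + s * L) * ‖deriv α t‖ := by ring
  calc ∫ t in (0:ℝ)..1, Fmet D π ε c (γ t) (deriv γ t)
      ≤ ∫ t in (0:ℝ)..1, (1 + s * L) / √s * ‖deriv α t‖ := by
        refine intervalIntegral.integral_mono_ae_restrict zero_le_one hFint
          (hαi.const_mul _) ?_
        rw [EventuallyLE, ← restrict_Ioo_eq_restrict_Icc, ae_restrict_iff' measurableSet_Ioo]
        exact hpt
    _ = (1 + s * L) / √s * ∫ t in (0:ℝ)..1, ‖deriv α t‖ :=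
        intervalIntegral.integral_const_mul _ _
    _ ≤ _ := by gcongr

/-- Points at distance at least `R` from the boundary are at bounded distance from each other. -/
lemma exists_conn_core (H : Collar D π n ε c R L C) :
    ∃ M : ℝ, 0 ≤ M ∧ ∀ x ∈ D, R ≤ infDist x (frontier D) → ∀ y ∈ D,
      R ≤ infDist y (frontier D) → Conn D (Fmet D π ε c) x y M := by
  have hcomp : IsCompact {x | x ∈ D ∧ R ≤ infDist x (frontier D)} := by
    have e : {x | x ∈ D ∧ R ≤ infDist x (frontier D)}
        = closure D ∩ {x | R ≤ infDist x (frontier D)} := by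
      ext x
      refine ⟨fun h => ⟨subset_closure h.1, h.2⟩, fun h => ⟨?_, h.2⟩⟩
      by_contra hx
      have hxf : x ∈ frontier D := by
        rw [frontier, H.isOpen.interior_eq]
        exact ⟨h.1, hx⟩
      have h2 : R ≤ infDist x (frontier D) := h.2
      rw [infDist_zero_of_mem hxf] at h2
      linarith [H.hR]
    rw [e]
    exact H.bdd.isCompact_closure.inter_right
      (isClosed_le continuous_const (continuous_infDist_pt _))
  obtain ⟨M, hM⟩ := exists_conn_bound (S := D) (G := Fmet D π ε c)
    (fun x v a ha => Fmet_smul D π ε c x v a ha) H.conn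
    (fun x hx => by
      have hδ := H.hδ x hx
      set r := infDist x (frontier D) / 2 with hr
      have hr0 : 0 < r := by positivity
      have hsub : Metric.ball x r ⊆ D :=
        (ball_subset_ball (by linarith)).trans (ball_infDist_frontier_subset H.isOpen hx)
      have hlow : ∀ y ∈ Metric.ball x r, r ≤ infDist y (frontier D) := by
        intro y hy
        have := infDist_le_infDist_add_dist (x := x) (y := y) (s := frontier D)
        rw [mem_ball, dist_comm] at hy
        linarith
      refine ⟨Metric.ball x r, mem_nhdsWithin_of_mem_nhds (ball_mem_nhds x hr0),
        (1 / (2 * r) + 2 / √r + c) * (2 * r), fun y hy z hz => ?_⟩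
      let γ : ℝ → Euc d := fun t => y + t • (z - y)
      have hγb : ∀ t ∈ Icc (0:ℝ) 1, γ t ∈ Metric.ball x r := by
        intro t ht
        exact (convex_ball x r).add_smul_sub_mem hy hz ht
      have hγd : ∀ t, deriv γ t = z - y := by
        intro t
        have : HasDerivAt γ (z - y) t := by
          have := ((hasDerivAt_id t).smul_const (z - y)).const_add y
          rw [one_smul] at this
          exact this
        exact this.deriv
      have hγc : ContDiff ℝ 1 γ := contDiff_const.add (contDiff_id.smul contDiff_const)
      have hγp : PiecewiseC1On γ 0 1 := piecewiseC1On_of_contDiffOn zero_le_one hγc.contDiffOn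
      have hγD : ∀ t ∈ Icc (0:ℝ) 1, γ t ∈ D := fun t ht => hsub (hγb t ht)
      have hFint := intervalIntegrable_Fmet H.compact H.hc H.hδ H.hπ H.hπN hγp hγD
      refine ⟨γ, hγp, hγD, by simp [γ], by simp [γ], hFint, ?_⟩
      refine integral_le_of_le_const hFint fun t ht => ?_
      have htI : t ∈ Icc (0:ℝ) 1 := ⟨ht.1.le, ht.2.le⟩
      refine (Fmet_le H.hc (H.hπ _ (hγD t htI)).2 hr0 (hlow _ (hγb t htI)) _).trans ?_
      have hc := H.hc
      gcongr
      rw [hγd, ← dist_eq_norm]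
      rw [mem_ball] at hy hz
      linarith [dist_triangle_right z y x]) hcomp (fun x hx => hx.1)
  exact ⟨|M|, abs_nonneg M, fun x hx hxR y hy hyR =>
    (hM x ⟨hx, hxR⟩ y ⟨hy, hyR⟩).mono (le_abs_self M)⟩

end Collar

namespace Collar
variable {D : Set (Euc d)} {π n : Euc d → Euc d} {ε c R L C : ℝ}

lemma log_hfun (D : Set (Euc d)) (x : Euc d) :
    Real.log (hfun D x) = Real.log (infDist x (frontier D)) / 2 :=
  Real.log_sqrt infDist_nonneg

/-- Climbing along the normal from `x` to boundary distance `s`, and back. -/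
lemma conn_climb (H : Collar D π n ε c R L C) {x : Euc d} (hx : x ∈ D) {s : ℝ}
    (hxs : infDist x (frontier D) ≤ s) (hsR : s ≤ R) :
    Conn D (Fmet D π ε c) x (π x - s • n (π x)) (Real.log √s - Real.log (hfun D x)) ∧
    Conn D (Fmet D π ε c) (π x - s • n (π x)) x (Real.log √s - Real.log (hfun D x)) := by
  have hδ := H.hδ x hx
  have hs : 0 < s := hδ.trans_le hxs
  have hp := (H.hπ x hx).1
  have hlog := Real.log_le_log hδ hxs
  have e1 : |Real.log s - Real.log (infDist x (frontier D))| / 2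
      = Real.log √s - Real.log (hfun D x) := by
    rw [log_hfun, Real.log_sqrt hs.le, abs_of_nonneg (sub_nonneg.2 hlog)]
    ring
  have e2 : |Real.log (infDist x (frontier D)) - Real.log s| / 2
      = Real.log √s - Real.log (hfun D x) := by
    rw [abs_sub_comm, e1]
  have h1 := H.conn_vertical hp hδ (hxs.trans hsR) hs hsR
  have h2 := H.conn_vertical hp hs hsR hδ (hxs.trans hsR)
  rw [← H.foot x hx] at h1 h2
  rw [e1] at h1
  rw [e2] at h2
  exact ⟨h1, h2⟩

/-- Two points are joined by climbing along the normals to `h = max (h x) (h y) (‖π x - π y‖)`,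
moving parallel to the boundary, and descending; if this value of `h` exceeds `√R`, the curve
crosses the core of the domain instead. -/
lemma exists_upper_bound (H : Collar D π n ε c R L C) {Δ : ℝ} (hRΔ : R ≤ Δ)
    (hδΔ : ∀ x ∈ D, infDist x (frontier D) ≤ Δ) :
    ∃ B : ℝ, ∀ x ∈ D, ∀ y ∈ D, Conn D (Fmet D π ε c) x y
      (2 * Real.log (‖π x - π y‖ + max (hfun D x) (hfun D y))
        - Real.log (hfun D x) - Real.log (hfun D y) + B) := by
  obtain ⟨M, hM0, hM⟩ := H.exists_conn_core
  have hG : ∀ x v, ∀ a : ℝ, 0 < a → Fmet D π ε c x (a • v) = a * Fmet D π ε c x v :=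
    fun x v a ha => Fmet_smul D π ε c x v a ha
  have hR := H.hR
  have hR' : 0 < √R := Real.sqrt_pos.2 hR
  have hL := H.hL
  have hC := H.hC
  have hlogΔ : Real.log √R ≤ Real.log √Δ := Real.log_le_log hR' (Real.sqrt_le_sqrt hRΔ)
  have hhpos : ∀ x ∈ D, 0 < hfun D x := fun x hx => Real.sqrt_pos.2 (H.hδ x hx)
  -- every point reaches the core
  have hup : ∀ x ∈ D, ∃ x' ∈ D, R ≤ infDist x' (frontier D) ∧
      Conn D (Fmet D π ε c) x x' (Real.log √Δ - Real.log (hfun D x) + M) ∧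
      Conn D (Fmet D π ε c) x' x (Real.log √Δ - Real.log (hfun D x) + M) := by
    intro x hx
    rcases le_total R (infDist x (frontier D)) with h | h
    · have hle : Real.log (hfun D x) ≤ Real.log √Δ :=
        Real.log_le_log (hhpos x hx) (Real.sqrt_le_sqrt (hδΔ x hx))
      have hc := (hM x hx h x hx h).mono
        (by linarith : M ≤ Real.log √Δ - Real.log (hfun D x) + M)
      exact ⟨x, hx, h, hc, hc⟩
    · obtain ⟨h1, h2⟩ := H.conn_climb hx h le_rfl
      have hp := (H.hπ x hx).1
      exact ⟨_, H.push_mem hp hR le_rfl, (H.infDist_push hp hR le_rfl).ge,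
        h1.mono (by linarith), h2.mono (by linarith)⟩
  refine ⟨(1 + R * L) * C + 3 * M + 2 * (Real.log √Δ - Real.log √R), fun x hx y hy => ?_⟩
  have hpx := (H.hπ x hx).1
  have hpy := (H.hπ y hy).1
  set ℓ := ‖π x - π y‖ with hℓ
  have hℓ0 : 0 ≤ ℓ := norm_nonneg _
  have hxp := hhpos x hx
  have hyp := hhpos y hy
  have hRLC : 0 ≤ (1 + R * L) * C := by positivity
  by_cases hcase : (infDist x (frontier D) ≤ R ∧ infDist y (frontier D) ≤ R) ∧ ℓ ^ 2 ≤ R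
  · obtain ⟨⟨hxR, hyR⟩, hℓR⟩ := hcase
    set s := max (max (infDist x (frontier D)) (infDist y (frontier D))) (ℓ ^ 2) with hs
    have hxs : infDist x (frontier D) ≤ s := (le_max_left _ _).trans (le_max_left _ _)
    have hys : infDist y (frontier D) ≤ s := (le_max_right _ _).trans (le_max_left _ _)
    have hℓs : ℓ ^ 2 ≤ s := le_max_right _ _
    have hsR : s ≤ R := max_le (max_le hxR hyR) hℓR
    have hs0 : 0 < s := (H.hδ x hx).trans_le hxs
    have hsq : 0 < √s := Real.sqrt_pos.2 hs0
    have hℓsq : ℓ ≤ √s := Real.le_sqrt_of_sq_le hℓs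
    have hconn := ((H.conn_climb hx hxs hsR).1.trans hG
      (H.conn_tangential hpx hpy hs0 hsR)).trans hG (H.conn_climb hy hys hsR).2
    refine hconn.mono ?_
    have htan : (1 + s * L) / √s * (C * ℓ) ≤ (1 + R * L) * C := by
      rw [div_mul_eq_mul_div, div_le_iff₀ hsq]
      calc (1 + s * L) * (C * ℓ) ≤ (1 + R * L) * (C * √s) := by gcongr
        _ = _ := by ring
    have hlog : Real.log √s ≤ Real.log (ℓ + max (hfun D x) (hfun D y)) := by
      refine Real.log_le_log hsq ?_
      have hm : 0 < max (hfun D x) (hfun D y) := lt_max_of_lt_left hxp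
      rw [Real.sqrt_le_left (by positivity)]
      have hxm : hfun D x ≤ max (hfun D x) (hfun D y) := le_max_left _ _
      have hym : hfun D y ≤ max (hfun D x) (hfun D y) := le_max_right _ _
      have hx2 : hfun D x ^ 2 = infDist x (frontier D) := Real.sq_sqrt infDist_nonneg
      have hy2 : hfun D y ^ 2 = infDist y (frontier D) := Real.sq_sqrt infDist_nonneg
      refine max_le (max_le ?_ ?_) ?_
      · rw [← hx2]
        gcongr
        linarith
      · rw [← hy2]
        gcongr
        linarith
      · gcongr
        linarith
    linarith
  · obtain ⟨x', hx', hx'R, hxx', -⟩ := hup x hx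
    obtain ⟨y', hy', hy'R, -, hyy'⟩ := hup y hy
    refine ((hxx'.trans hG (hM x' hx' hx'R y' hy' hy'R)).trans hG hyy').mono ?_
    have hbig : √R ≤ ℓ + max (hfun D x) (hfun D y) := by
      have hxm : hfun D x ≤ max (hfun D x) (hfun D y) := le_max_left _ _
      have hym : hfun D y ≤ max (hfun D x) (hfun D y) := le_max_right _ _
      rw [not_and_or, not_and_or, not_le, not_le, not_le] at hcase
      rcases hcase with (h | h) | h
      · have : √R ≤ hfun D x := Real.sqrt_le_sqrt h.le
        linarith
      · have : √R ≤ hfun D y := Real.sqrt_le_sqrt h.le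
        linarith
      · have : √R ≤ ℓ := (Real.sqrt_le_left hℓ0).2 h.le
        linarith
    have hlog := Real.log_le_log hR' hbig
    linarith

end Collar

section
variable {D : Set (Euc d)} {π : Euc d → Euc d} {ε c : ℝ}

lemma exists_collar (hD : IsC2BoundedDomain D) (hfc : IsConnected (frontier D))
    (hε0 : 0 < ε) (hc : 0 < c)
    (hπ : ∀ x ∈ D, π x ∈ frontier D ∧ dist x (π x) = infDist x (frontier D))
    (hπN : ∀ x ∈ D, infDist x (frontier D) ≤ ε →
      ∀ q ∈ frontier D, dist x q = infDist x (frontier D) → q = π x) :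
    ∃ (n : Euc d → Euc d) (R L C : ℝ), Collar D π n ε c R L C := by
  obtain ⟨hDo, hDc, hDb, U, u, hU, hfU, hu, hDU, hf0, hne⟩ := hD
  have hfr : IsCompact (frontier D) :=
    isCompact_of_isClosed_isBounded isClosed_frontier
      (hDb.closure.subset frontier_subset_closure)
  have hδ : ∀ x ∈ D, 0 < infDist x (frontier D) := by
    intro x hx
    rw [← isClosed_frontier.notMem_iff_infDist_pos hfc.nonempty]
    exact fun h => (disjoint_frontier_iff_isOpen.2 hDo).le_bot ⟨h, hx⟩
  obtain ⟨W, hW, hfW, hnW⟩ := exists_contDiffOn_unormal hU hfU hu hne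
  obtain ⟨R₀, hR₀, hball⟩ := exists_interior_ball hfr hU hfU hu hDU hf0 hne
  obtain ⟨C, hC, hchord⟩ := exists_conn_frontier hfr hfc hU hu hf0 hne
  obtain ⟨L, hL⟩ := hfr.exists_bound_of_continuousOn
    ((hnW.continuousOn_fderiv_of_isOpen hW le_rfl).mono hfW)
  obtain ⟨p₀, hp₀⟩ := hfc.nonempty
  exact ⟨unormal u, min R₀ ε, L, C,
    { isOpen := hDo
      conn := hDc.isPreconnected
      bdd := hDb
      compact := hfr
      nonempty := ⟨p₀, hp₀⟩
      hc := hc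
      hδ := hδ
      hπ := hπ
      hπN := hπN
      hR := lt_min hR₀ hε0
      hRε := min_le_right _ _
      hL := (norm_nonneg _).trans (hL p₀ hp₀)
      hC := hC
      norm_normal := fun p hp => norm_unormal (gradient_ne_zero (hne p hp))
      smooth := ⟨W, hW, hfW, hnW⟩
      norm_fderiv := hL
      ball := fun p hp s hs hsR => hball p hp s hs (hsR.trans (min_le_left _ _))
      foot := fun x hx => eq_sub_smul_unormal hDo hU hfU hu hDU hf0 hne hx (hπ x hx).1
        (hπ x hx).2 (hδ x hx)
      chordArc := hchord }⟩

lemma dH_eq (hδ : ∀ x ∈ D, 0 < infDist x (frontier D)) {x y : Euc d} (hx : x ∈ D) (hy : y ∈ D)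
    (hb : 0 ≤ bdist D (π x) (π y)) :
    dH D π x y = 2 * Real.log (bdist D (π x) (π y) + max (hfun D x) (hfun D y))
      - Real.log (hfun D x) - Real.log (hfun D y) := by
  have hxp : 0 < hfun D x := Real.sqrt_pos.2 (hδ x hx)
  have hyp : 0 < hfun D y := Real.sqrt_pos.2 (hδ y hy)
  have hm : 0 < max (hfun D x) (hfun D y) := lt_max_of_lt_left hxp
  rw [dH, Real.log_div (by positivity) (by positivity), Real.log_sqrt (by positivity),
    Real.log_mul hxp.ne' hyp.ne']
  ring

end

end Auxiliary

/-- The intrinsic distance `d_F` of the filling Finsler metric is at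
bounded additive distance from the hyperbolic filling distance `d_H`. -/
theorem dF_additively_equivalent_dH
    (d : ℕ) (hd : 3 ≤ d) (D : Set (Euc d)) (hD : IsC2BoundedDomain D)
    (hfc : IsConnected (frontier D))
    (ε : ℝ) (hε0 : 0 < ε) (hε1 : ε < 1) (c : ℝ) (hc : 0 < c)
    (π : Euc d → Euc d)
    (hπ : ∀ x ∈ D, π x ∈ frontier D ∧ dist x (π x) = Metric.infDist x (frontier D))
    (hπN : ∀ x ∈ D, Metric.infDist x (frontier D) ≤ ε →
      ∀ q ∈ frontier D, dist x q = Metric.infDist x (frontier D) → q = π x) :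
    ∃ B : ℝ, 0 ≤ B ∧ ∀ x ∈ D, ∀ y ∈ D,
      dH D π x y - B ≤ dF D π ε c x y ∧ dF D π ε c x y ≤ dH D π x y + B := by
  obtain ⟨n, R, L, C, H⟩ := exists_collar hD hfc hε0 hc hπ hπN
  -- a bound for the distance to the boundary
  obtain ⟨Δ, hΔ1, hδΔ⟩ : ∃ Δ : ℝ, 1 ≤ Δ ∧ ∀ x ∈ D, infDist x (frontier D) ≤ Δ := by
    obtain ⟨p, hp⟩ := H.nonempty
    obtain ⟨r, hr⟩ := H.bdd.subset_closedBall p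
    exact ⟨max 1 r, le_max_left _ _, fun x hx => (infDist_le_dist_of_mem hp).trans
      ((mem_closedBall.1 (hr hx)).trans (le_max_right _ _))⟩
  obtain ⟨κ, hκ, hlow⟩ := exists_lower_bound H.compact hc hε0 hε1 H.hδ hπ hπN hΔ1 hδΔ
  obtain ⟨B₁, hB₁⟩ := H.exists_upper_bound ((H.hRε.trans hε1.le).trans hΔ1) hδΔ
  -- `Q` compares `H(π x, π y) + max (h x) (h y)` with `‖x - y‖ + max (h x) (h y)`
  set Q : ℝ := C * (1 + 2 * √Δ) + 1 with hQ
  have hC := H.hC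
  have hQ0 : 0 < Q := by positivity
  refine ⟨max |B₁| (2 * |Real.log (κ / Q)|), le_max_of_le_left (abs_nonneg _),
    fun x hx y hy => ?_⟩
  have hpx := (hπ x hx).1
  have hpy := (hπ y hy).1
  have hch := H.chordArc _ hpx _ hpy
  have hb1 := norm_sub_le_bdist hch
  have hb2 := bdist_le_of_conn hch
  have hb0 : 0 ≤ bdist D (π x) (π y) := (norm_nonneg _).trans hb1
  have hxp : 0 < hfun D x := Real.sqrt_pos.2 (H.hδ x hx)
  have hyp : 0 < hfun D y := Real.sqrt_pos.2 (H.hδ y hy)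
  have hm : 0 < max (hfun D x) (hfun D y) := lt_max_of_lt_left hxp
  obtain ⟨γ₀, hγ₀, hγ₀D, hγ₀x, hγ₀y, -, hγ₀L⟩ := hB₁ x hx y hy
  rw [dH_eq H.hδ hx hy hb0, dF]
  constructor
  · refine le_csInf ⟨_, γ₀, hγ₀, hγ₀D, hγ₀x, hγ₀y, rfl⟩ ?_
    rintro Λ ⟨γ, hγ, hγD, rfl, rfl, rfl⟩
    refine le_trans ?_ (hlow γ hγ hγD)
    set x := γ 0
    set y := γ 1
    have hproj : ‖π x - π y‖ ≤ ‖x - y‖ + 2 * √Δ * max (hfun D x) (hfun D y) := by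
      have hsq : ∀ z ∈ D, dist z (π z) ≤ √Δ * hfun D z := by
        intro z hz
        rw [(hπ z hz).2, hfun]
        nth_rw 1 [← Real.mul_self_sqrt (infDist_nonneg (x := z) (s := frontier D))]
        gcongr
        exact hδΔ z hz
      have h1 : √Δ * hfun D x ≤ √Δ * max (hfun D x) (hfun D y) := by
        gcongr
        exact le_max_left _ _
      have h2 : √Δ * hfun D y ≤ √Δ * max (hfun D x) (hfun D y) := by
        gcongr
        exact le_max_right _ _
      have h3 := dist_triangle4 (π x) x y (π y)
      rw [dist_comm (π x) x, dist_eq_norm (π x), dist_eq_norm x y] at h3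
      linarith [hsq x hx, hsq y hy]
    have hle : bdist D (π x) (π y) + max (hfun D x) (hfun D y)
        ≤ Q * (‖x - y‖ + max (hfun D x) (hfun D y)) := by
      have h1 := mul_le_mul_of_nonneg_left hproj hC
      have h2 : 0 ≤ √Δ := Real.sqrt_nonneg _
      have h3 : 0 ≤ ‖x - y‖ := norm_nonneg _
      have h4 : 0 ≤ C * √Δ * ‖x - y‖ := by positivity
      rw [hQ]
      nlinarith [mul_nonneg hC hm.le]
    have hS : 0 < ‖x - y‖ + max (hfun D x) (hfun D y) := by positivity
    have hlog := Real.log_le_log (by positivity) hle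
    rw [Real.log_mul hQ0.ne' hS.ne'] at hlog
    rw [Real.log_mul hκ.ne' hS.ne']
    have hB : 2 * |Real.log (κ / Q)| ≤ max |B₁| (2 * |Real.log (κ / Q)|) := le_max_right _ _
    have habs := neg_abs_le (Real.log (κ / Q))
    rw [Real.log_div hκ.ne' hQ0.ne'] at habs hB ⊢
    linarith
  · refine le_trans (csInf_le ?_ ?_) (hγ₀L.trans ?_)
    · refine ⟨0, ?_⟩
      rintro Λ ⟨γ, -, -, -, -, rfl⟩
      exact intervalIntegral.integral_nonneg zero_le_one fun t _ => Fmet_nonneg D π hc _ _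
    · exact ⟨γ₀, hγ₀, hγ₀D, hγ₀x, hγ₀y, rfl⟩
    · have hlog := Real.log_le_log (by positivity)
        (add_le_add_left hb1 (max (hfun D x) (hfun D y)))
      have hB : |B₁| ≤ max |B₁| (2 * |Real.log (κ / Q)|) := le_max_left _ _
      have := le_abs_self B₁
      linarith
end
end

section
/- Let d ≥ 3 and let D ⊂ ℝ^d be a bounded domain with C² connected boundary. Then for all x₁, x₂, x₃, x₄ ∈ D: d_H(x₁,x₂) + d_H(x₃,x₄) ≤ max( d_H(x₁,x₃) + d_H(x₂,x₄), d_H(x₁,x₄) + d_H(x₂,x₃) ) + 4 log 2. In particular (D, d_H) is Gromov hyperbolic with δ = 2 log 2. -/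
/-!
With `r x y = H(π x, π y) + max (h x) (h y)`, one has
`d_H(x, y) = 2 log r x y - log h(x) - log h(y)`, so the terms in `h` cancel from the four-point
condition and it reduces to `r₁₂ r₃₄ ≤ 4 max (r₁₃ r₂₄) (r₁₄ r₂₃)` (`mul_le_four_mul_max`), which
holds for any positive symmetric `r` satisfying the triangle inequality.

The triangle inequality for `r` comes from the one for `H` (`bdist_triangle`), obtained by
concatenating curves (`Joins.trans`). Since `H` is a real infimum, with value `0` on the empty set,
this needs any two boundary points to be joined by a piecewise `C¹` curve in `∂D`
(`exists_joins_frontier`): the boundary is locally a regular level set, so by the inverse function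
theorem nearby points are joined (`eventually_joins`), and connectedness of `∂D` does the rest.
-/

open scoped RealInnerProductSpace ENNReal
open Metric Set Filter

noncomputable section

/-! ### Piecewise `C¹` curves as chains of `C¹` pieces -/

/-- `C1Chain γ a b`: the interval `[a, b]` is a finite concatenation of closed intervals on each of
which `γ` is `C¹`. This inductive form of the subdivision in `PiecewiseC1On` makes it possible to
argue by adding one piece at a time. -/
inductive C1Chain {d : ℕ} (γ : ℝ → Euc d) (a : ℝ) : ℝ → Prop
  | refl : C1Chain γ a a
  | snoc {b c : ℝ} : C1Chain γ a b → b ≤ c → ContDiffOn ℝ 1 γ (Icc b c) → C1Chain γ a c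

namespace C1Chain

variable {d : ℕ} {γ : ℝ → Euc d} {a b c : ℝ}

lemma le (h : C1Chain γ a b) : a ≤ b := by
  induction h with
  | refl => exact le_rfl
  | snoc _ h _ ih => exact ih.trans h

lemma single (hab : a ≤ b) (h : ContDiffOn ℝ 1 γ (Icc a b)) : C1Chain γ a b :=
  refl.snoc hab h

lemma trans (h₁ : C1Chain γ a b) (h₂ : C1Chain γ b c) : C1Chain γ a c := by
  induction h₂ with
  | refl => exact h₁
  | snoc _ h h' ih => exact ih.snoc h h'

lemma continuousOn (h : C1Chain γ a b) : ContinuousOn γ (Icc a b) := by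
  induction h with
  | refl => simp
  | snoc h₁ h h' ih =>
    rw [← Icc_union_Icc_eq_Icc h₁.le h]
    exact ih.union_of_isClosed h'.continuousOn isClosed_Icc isClosed_Icc

lemma congr {γ' : ℝ → Euc d} (h : C1Chain γ a b) (he : EqOn γ' γ (Icc a b)) :
    C1Chain γ' a b := by
  induction h with
  | refl => exact refl
  | snoc h₁ h h' ih =>
    exact (ih (he.mono (Icc_subset_Icc_right h))).snoc h
      (h'.congr (he.mono (Icc_subset_Icc_left h₁.le)))

/-- Precomposition with an increasing affine map. -/
lemma comp_mul_add {k e : ℝ} (hk : 0 < k) (h : C1Chain γ (k * a + e) (k * b + e)) :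
    C1Chain (fun t => γ (k * t + e)) a b := by
  have key : ∀ q, C1Chain γ (k * a + e) q →
      C1Chain (fun t => γ (k * t + e)) a ((q - e) / k) := by
    intro q hq
    induction hq with
    | refl =>
      have : (k * a + e - e) / k = a := by field_simp; ring
      rw [this]; exact refl
    | snoc h₁ h h' ih =>
      refine ih.snoc (by gcongr) (h'.comp (by fun_prop) ?_)
      intro t ht
      rw [mem_Icc, div_le_iff₀ hk, le_div_iff₀ hk] at ht
      constructor <;> linarith [ht.1, ht.2]
  have := key _ h
  rwa [show (k * b + e - e) / k = b by field_simp; ring] at this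

/-- Reversal of the parameter. -/
lemma reverse (e : ℝ) (h : C1Chain γ a b) : C1Chain (fun t => γ (e - t)) (e - b) (e - a) := by
  induction h with
  | refl => exact refl
  | snoc h₁ h h' ih =>
    refine (single (by linarith) (h'.comp (by fun_prop) ?_)).trans ih
    intro t ht
    constructor <;> linarith [ht.1, ht.2]

/-- The speed of a piecewise `C¹` curve is integrable: on the interior of a piece it is the norm
of the one-sided derivative, which is continuous up to the endpoints. -/
lemma intervalIntegrable (h : C1Chain γ a b) :
    IntervalIntegrable (fun t => ‖deriv γ t‖) MeasureTheory.volume a b := by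
  induction h with
  | refl => exact IntervalIntegrable.refl
  | @snoc b c h₁ h h' ih =>
    refine ih.trans ?_
    rcases h.eq_or_lt with rfl | hlt
    · exact IntervalIntegrable.refl
    have hc : ContinuousOn (fun t => ‖derivWithin γ (Icc b c) t‖) (uIcc b c) := by
      rw [uIcc_of_le h]
      exact (h'.continuousOn_derivWithin (uniqueDiffOn_Icc hlt) le_rfl).norm
    refine hc.intervalIntegrable.congr_uIoo ?_
    intro t ht
    rw [uIoo_of_le h] at ht
    simp only
    rw [derivWithin_of_mem_nhds (Icc_mem_nhds ht.1 ht.2)]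

lemma piecewiseC1On (h : C1Chain γ a b) : PiecewiseC1On γ a b := by
  refine ⟨h.continuousOn, ?_⟩
  induction h with
  | refl =>
    refine ⟨0, fun _ => a, monotone_const, rfl, rfl, fun i => ?_⟩
    simp only [Icc_self]
    exact (contDiffOn_const (c := γ a)).congr fun t ht => by rw [mem_singleton_iff.1 ht]
  | @snoc b c h₁ h h' ih =>
    obtain ⟨n, t, ht, h0, hl, hp⟩ := ih
    refine ⟨n + 1, Fin.snoc (α := fun _ => ℝ) t c, ?_, ?_, ?_, ?_⟩
    · rw [Fin.monotone_iff_le_succ]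
      intro i
      refine Fin.lastCases ?_ (fun j => ?_) i
      · rw [Fin.succ_last, Fin.snoc_last, Fin.snoc_castSucc, hl]
        exact h
      · rw [Fin.succ_castSucc, Fin.snoc_castSucc, Fin.snoc_castSucc]
        exact ht (Fin.castSucc_le_succ j)
    · rw [← Fin.castSucc_zero, Fin.snoc_castSucc, h0]
    · rw [Fin.snoc_last]
    · intro i
      refine Fin.lastCases ?_ (fun j => ?_) i
      · rw [Fin.succ_last, Fin.snoc_last, Fin.snoc_castSucc, hl]
        exact h'
      · rw [Fin.succ_castSucc, Fin.snoc_castSucc, Fin.snoc_castSucc]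
        exact hp j

end C1Chain

lemma PiecewiseC1On.c1Chain {d : ℕ} {γ : ℝ → Euc d} {a b : ℝ} (h : PiecewiseC1On γ a b) :
    C1Chain γ a b := by
  obtain ⟨-, n, t, ht, rfl, rfl, hp⟩ := h
  have key : ∀ i : Fin (n + 2), C1Chain γ (t 0) (t i) := by
    intro i
    induction i using Fin.induction with
    | zero => exact .refl
    | succ i ih => exact ih.snoc (ht (Fin.castSucc_le_succ i)) (hp i)
  exact key _

/-! ### The length distance on a set -/

/-- `Joins S ξ η L`: some piecewise `C¹` curve in `S` of length `L` runs from `ξ` to `η`. -/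
def Joins {d : ℕ} (S : Set (Euc d)) (ξ η : Euc d) (L : ℝ) : Prop :=
  ∃ α : ℝ → Euc d, PiecewiseC1On α 0 1 ∧
    (∀ t ∈ Icc (0 : ℝ) 1, α t ∈ S) ∧ α 0 = ξ ∧ α 1 = η ∧
    L = ∫ t in (0 : ℝ)..(1 : ℝ), ‖deriv α t‖

namespace Joins

variable {d : ℕ} {S : Set (Euc d)} {ξ η ζ : Euc d} {L M : ℝ}

lemma nonneg (h : Joins S ξ η L) : 0 ≤ L := by
  obtain ⟨α, -, -, -, -, rfl⟩ := h
  exact intervalIntegral.integral_nonneg zero_le_one fun _ _ => norm_nonneg _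

lemma symm (h : Joins S ξ η L) : Joins S η ξ L := by
  obtain ⟨α, hα, hS, h0, h1, rfl⟩ := h
  refine ⟨fun t => α (1 - t), ?_, ?_, by simpa, by simpa, ?_⟩
  · simpa using (hα.c1Chain.reverse 1).piecewiseC1On
  · intro t ht
    exact hS _ ⟨by linarith [ht.2], by linarith [ht.1]⟩
  · simp only [deriv_comp_const_sub, norm_neg]
    rw [intervalIntegral.integral_comp_sub_left (fun t => ‖deriv α t‖)]
    simp

/-- Concatenation: both curves are run at double speed, and lengths add up. -/
lemma trans (h₁ : Joins S ξ η L) (h₂ : Joins S η ζ M) : Joins S ξ ζ (L + M) := by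
  obtain ⟨α, hα, hαS, hα0, hα1, rfl⟩ := h₁
  obtain ⟨β, hβ, hβS, hβ0, hβ1, rfl⟩ := h₂
  set γ : ℝ → Euc d := fun t => if t ≤ 1 / 2 then α (2 * t + 0) else β (2 * t + -1) with hγ
  have eα : EqOn γ (fun t => α (2 * t + 0)) (Icc 0 (1 / 2)) := fun t ht => if_pos ht.2
  have eβ : EqOn γ (fun t => β (2 * t + -1)) (Icc (1 / 2) 1) := by
    intro t ht
    rcases ht.1.eq_or_lt with rfl | hlt
    · simp only [hγ, le_refl, if_true]
      norm_num [hα1, hβ0]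
    · exact if_neg (not_le.2 hlt)
  have cα : C1Chain γ 0 (1 / 2) :=
    (C1Chain.comp_mul_add two_pos (by simpa using hα.c1Chain)).congr eα
  have cβ : C1Chain γ (1 / 2) 1 :=
    (C1Chain.comp_mul_add two_pos (by norm_num; exact hβ.c1Chain)).congr eβ
  -- Chain rule and substitution for an affine change of parameter of slope `2`.
  have len : ∀ (σ : ℝ → Euc d) (e a b : ℝ), a ≤ b →
      EqOn γ (fun t => σ (2 * t + e)) (Icc a b) →
      ∫ t in a..b, ‖deriv γ t‖ = ∫ t in (2 * a + e)..(2 * b + e), ‖deriv σ t‖ := by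
    intro σ e a b hab he
    rw [← intervalIntegral.smul_integral_comp_mul_add (fun t => ‖deriv σ t‖),
      ← intervalIntegral.integral_smul]
    refine intervalIntegral.integral_congr_Ioo_of_le hab fun t ht => ?_
    have h1 : γ =ᶠ[nhds t] fun t => σ (2 * t + e) :=
      he.eventuallyEq_of_mem (Icc_mem_nhds ht.1 ht.2)
    have h2 : deriv (fun t => σ (2 * t + e)) t = (2 : ℝ) • deriv σ (2 * t + e) := by
      rw [deriv_comp_mul_left (2 : ℝ) (fun s => σ (s + e)) t, deriv_comp_add_const]
    simp only [h1.deriv_eq, h2, norm_smul]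
    norm_num
  refine ⟨γ, (cα.trans cβ).piecewiseC1On, ?_, ?_, ?_, ?_⟩
  · intro t ht
    simp only [hγ]
    split_ifs with hc
    · exact hαS _ ⟨by linarith [ht.1], by linarith⟩
    · exact hβS _ ⟨by linarith, by linarith [ht.2]⟩
  · simp [hγ, hα0]
  · norm_num [hγ, hβ1]
  · rw [← intervalIntegral.integral_add_adjacent_intervals cα.intervalIntegrable
      cβ.intervalIntegrable, len α 0 0 (1 / 2) (by norm_num) eα,
      len β (-1) (1 / 2) 1 (by norm_num) eβ]
    norm_num

end Joins

lemma bdist_eq {d : ℕ} (D : Set (Euc d)) (ξ η : Euc d) :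
    bdist D ξ η = sInf {L | Joins (frontier D) ξ η L} := rfl

lemma bdist_nonneg {d : ℕ} (D : Set (Euc d)) (ξ η : Euc d) : 0 ≤ bdist D ξ η :=
  Real.sInf_nonneg fun _ h => Joins.nonneg h

lemma bdist_comm {d : ℕ} (D : Set (Euc d)) (ξ η : Euc d) : bdist D ξ η = bdist D η ξ := by
  rw [bdist_eq, bdist_eq]
  congr 1
  ext L
  exact ⟨Joins.symm, Joins.symm⟩

/-- The triangle inequality, given that the points are joined by curves; without this assumption
the infimum over the empty set would be the junk value `0`. -/
lemma bdist_triangle {d : ℕ} {D : Set (Euc d)} {ξ η ζ : Euc d}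
    (h₁ : ∃ L, Joins (frontier D) ξ η L) (h₂ : ∃ L, Joins (frontier D) η ζ L) :
    bdist D ξ ζ ≤ bdist D ξ η + bdist D η ζ := by
  refine le_of_forall_pos_lt_add fun ε hε => ?_
  obtain ⟨L, hL, hL'⟩ := Real.lt_sInf_add_pos (s := {L | Joins (frontier D) ξ η L}) h₁ (half_pos hε)
  obtain ⟨M, hM, hM'⟩ := Real.lt_sInf_add_pos (s := {L | Joins (frontier D) η ζ L}) h₂ (half_pos hε)
  have : bdist D ξ ζ ≤ L + M :=
    csInf_le ⟨0, fun _ h => Joins.nonneg h⟩ (Joins.trans hL hM)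
  rw [← bdist_eq] at hL' hM'
  linarith

/-! ### Curves in a regular level set -/

/-- Points of a regular level set `{u = 0}` near `ξ` are joined to `ξ` inside the level set.
With `ℓ = du(ξ)` and `ℓ v = 1`, the map `Φ x = (x - ξ) - ℓ (x - ξ) v + u x v` has derivative the
identity at `ξ` and satisfies `ℓ ∘ Φ = u`; its local inverse therefore carries segments in
`ker ℓ` to curves in the level set. -/
lemma eventually_joins {d : ℕ} {S U : Set (Euc d)} {u : Euc d → ℝ} (hU : IsOpen U)
    (hu : ContDiffOn ℝ 2 u U) (hS : S = {x | x ∈ U ∧ u x = 0}) {ξ : Euc d} (hξ : ξ ∈ S)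
    (hd : fderiv ℝ u ξ ≠ 0) :
    ∀ᶠ η in nhdsWithin ξ S, ∃ L, Joins S ξ η L := by
  have hξ' := hξ
  rw [hS] at hξ'
  obtain ⟨hξU, hξ0⟩ := hξ'
  have huξ : ContDiffAt ℝ 1 u ξ := (hu.contDiffAt (hU.mem_nhds hξU)).of_le (by norm_num)
  set l := fderiv ℝ u ξ with hl
  obtain ⟨v, hv⟩ : ∃ v, l v = 1 := by
    obtain ⟨w, hw⟩ := DFunLike.ne_iff.1 hd
    refine ⟨(l w)⁻¹ • w, ?_⟩
    rw [map_smul, smul_eq_mul, inv_mul_cancel₀ hw]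
  set Φ : Euc d → Euc d := fun x => (x - ξ) - l (x - ξ) • v + u x • v with hΦ
  have hΦξ : Φ ξ = 0 := by simp [hΦ, hξ0]
  have hlΦ : ∀ x, l (Φ x) = u x := by
    intro x
    simp only [hΦ, map_add, map_sub, map_smul, smul_eq_mul, hv]
    ring
  have hΦc : ContDiffAt ℝ 1 Φ ξ := by
    have h1 : ContDiffAt ℝ 1 (fun x => (x - ξ) - l (x - ξ) • v) ξ := by fun_prop
    exact h1.add (huξ.smul contDiffAt_const)
  have hΦd : HasFDerivAt Φ
      ((ContinuousLinearEquiv.refl ℝ (Euc d) : Euc d ≃L[ℝ] Euc d) : Euc d →L[ℝ] Euc d) ξ := by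
    have h0 : HasFDerivAt u l ξ := (huξ.differentiableAt (by norm_num)).hasFDerivAt
    have h1 : HasFDerivAt (fun x => x - ξ) (ContinuousLinearMap.id ℝ (Euc d)) ξ :=
      (hasFDerivAt_id ξ).sub_const ξ
    have h2 := (h1.sub ((l.hasFDerivAt.comp ξ h1).smul_const v)).add (h0.smul_const v)
    refine h2.congr_fderiv ?_
    ext w
    simp
  set e := hΦc.toOpenPartialHomeomorph Φ hΦd one_ne_zero with he
  have heΦ : ∀ x, e x = Φ x := fun x => rfl
  have hξs : ξ ∈ e.source := hΦc.mem_toOpenPartialHomeomorph_source hΦd one_ne_zero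
  have h0t : (0 : Euc d) ∈ e.target := by
    have := e.map_source hξs
    rwa [heΦ, hΦξ] at this
  have hs0 : e.symm 0 = ξ := by
    rw [← hΦξ, ← heΦ, e.left_inv hξs]
  have hsc : ContDiffAt ℝ 1 e.symm 0 := by
    have := hΦc.to_localInverse hΦd one_ne_zero
    rwa [hΦξ] at this
  have hnear : ∀ᶠ y in nhds (0 : Euc d),
      y ∈ e.target ∧ e.symm y ∈ U ∧ ContDiffAt ℝ 1 e.symm y := by
    have hUs : U ∈ nhds (e.symm 0) := by rw [hs0]; exact hU.mem_nhds hξU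
    filter_upwards [e.open_target.mem_nhds h0t, hsc.continuousAt hUs,
      hsc.eventually (by simp)] with y h1 h2 h3
    exact ⟨h1, h2, h3⟩
  obtain ⟨r, hr, hball⟩ := Metric.eventually_nhds_iff_ball.1 hnear
  have hΦnear : ∀ᶠ η in nhds ξ, Φ η ∈ ball (0 : Euc d) r := by
    refine hΦc.continuousAt ?_
    rw [hΦξ]
    exact ball_mem_nhds _ hr
  filter_upwards [self_mem_nhdsWithin, nhdsWithin_le_nhds hΦnear,
    nhdsWithin_le_nhds (e.open_source.mem_nhds hξs)] with η hηS hηr hηs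
  rw [hS] at hηS
  have hseg : ∀ t ∈ Icc (0 : ℝ) 1, t • Φ η ∈ ball (0 : Euc d) r := by
    intro t ht
    rw [mem_ball_zero_iff] at hηr ⊢
    rw [norm_smul, Real.norm_of_nonneg ht.1]
    exact (mul_le_of_le_one_left (norm_nonneg _) ht.2).trans_lt hηr
  refine ⟨_, fun t => e.symm (t • Φ η), ?_, ?_, ?_, ?_, rfl⟩
  · refine (C1Chain.single zero_le_one fun t ht => ?_).piecewiseC1On
    have h1 : ContDiffAt ℝ 1 (fun t : ℝ => t • Φ η) t := by fun_prop
    exact (ContDiffAt.comp t (hball _ (hseg t ht)).2.2 h1).contDiffWithinAt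
  · intro t ht
    obtain ⟨ht1, ht2, -⟩ := hball _ (hseg t ht)
    rw [hS]
    refine ⟨ht2, ?_⟩
    rw [← hlΦ, ← heΦ, e.right_inv ht1, map_smul, hlΦ, hηS.2, smul_zero]
  · simp [hs0]
  · simp only [one_smul]
    rw [← heΦ, e.left_inv hηs]

/-- A connected `C²` boundary is connected by piecewise `C¹` curves. -/
lemma exists_joins_frontier {d : ℕ} {D : Set (Euc d)} (hD : IsC2BoundedDomain D)
    (hfc : IsConnected (frontier D)) {ξ η : Euc d} (hξ : ξ ∈ frontier D) (hη : η ∈ frontier D) :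
    ∃ L, Joins (frontier D) ξ η L := by
  obtain ⟨-, -, -, U, u, hU, -, hu, -, hS, hdu⟩ := hD
  refine hfc.isPreconnected.induction₂ (fun ξ η => ∃ L, Joins (frontier D) ξ η L) ?_ ?_ ?_ hξ hη
  · exact fun x hx => eventually_joins hU hu hS hx (hdu x hx)
  · exact fun x y z _ _ _ ⟨L, hL⟩ ⟨M, hM⟩ => ⟨L + M, hL.trans hM⟩
  · exact fun x y _ _ ⟨L, hL⟩ => ⟨L, hL.symm⟩

/-! ### The four-point condition -/

/-- The multiplicative four-point inequality for `r`, where `rᵢⱼ` stands for `r xᵢ xⱼ`; the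
hypotheses are the instances of the triangle inequality that bound `r₁₂` and `r₃₄`. If, say, `r₁₃` is the smallest of the
four numbers on the right, then `r₁₂ ≤ r₁₃ + r₂₃ ≤ 2 r₂₃` and `r₃₄ ≤ r₁₃ + r₁₄ ≤ 2 r₁₄`. -/
lemma mul_le_four_mul_max {r₁₂ r₃₄ r₁₃ r₂₄ r₁₄ r₂₃ : ℝ} (h₁₂ : 0 < r₁₂) (h₃₄ : 0 < r₃₄)
    (a : r₁₂ ≤ r₁₃ + r₂₃) (b : r₁₂ ≤ r₁₄ + r₂₄) (c : r₃₄ ≤ r₁₃ + r₁₄) (e : r₃₄ ≤ r₂₃ + r₂₄) :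
    r₁₂ * r₃₄ ≤ 4 * (r₁₃ * r₂₄) ∨ r₁₂ * r₃₄ ≤ 4 * (r₁₄ * r₂₃) := by
  have key : ∀ x y : ℝ, r₁₂ ≤ 2 * x → r₃₄ ≤ 2 * y → r₁₂ * r₃₄ ≤ 4 * (x * y) := by
    intro x y hx hy
    have := mul_le_mul hx hy h₃₄.le (h₁₂.le.trans hx)
    linarith
  rcases le_total r₁₃ r₂₃ with h1 | h1 <;> rcases le_total r₁₄ r₂₄ with h2 | h2
  · rcases le_total r₁₃ r₁₄ with h3 | h3
    · right; linarith [key r₂₃ r₁₄ (by linarith) (by linarith)]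
    · left; linarith [key r₂₄ r₁₃ (by linarith) (by linarith)]
  · rcases le_total r₁₃ r₂₄ with h3 | h3
    · right; linarith [key r₂₃ r₁₄ (by linarith) (by linarith)]
    · right; linarith [key r₁₄ r₂₃ (by linarith) (by linarith)]
  · rcases le_total r₂₃ r₁₄ with h3 | h3
    · left; linarith [key r₁₃ r₂₄ (by linarith) (by linarith)]
    · left; linarith [key r₂₄ r₁₃ (by linarith) (by linarith)]
  · rcases le_total r₂₃ r₂₄ with h3 | h3
    · left; linarith [key r₁₃ r₂₄ (by linarith) (by linarith)]
    · right; linarith [key r₁₄ r₂₃ (by linarith) (by linarith)]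

/-- The hyperbolic filling distance `d_H` satisfies the four-point
condition with constant `4 log 2`; in particular `(D, d_H)` is Gromov hyperbolic with
`δ = 2 log 2`. -/
theorem dH_four_point_condition
    (d : ℕ) (hd : 3 ≤ d) (D : Set (Euc d)) (hD : IsC2BoundedDomain D)
    (hfc : IsConnected (frontier D)) (π : Euc d → Euc d)
    (hπ : ∀ x ∈ D, π x ∈ frontier D ∧ dist x (π x) = Metric.infDist x (frontier D)) :
    ∀ x₁ ∈ D, ∀ x₂ ∈ D, ∀ x₃ ∈ D, ∀ x₄ ∈ D,
      dH D π x₁ x₂ + dH D π x₃ x₄ ≤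
        max (dH D π x₁ x₃ + dH D π x₂ x₄) (dH D π x₁ x₄ + dH D π x₂ x₃)
          + 4 * Real.log 2 := by
  intro x₁ h₁ x₂ h₂ x₃ h₃ x₄ h₄
  have hpos : ∀ x ∈ D, 0 < hfun D x := by
    intro x hx
    refine Real.sqrt_pos.2 ((isClosed_frontier.notMem_iff_infDist_pos hfc.nonempty).1 fun hf => ?_)
    rw [hD.1.frontier_eq] at hf
    exact hf.2 hx
  set r : Euc d → Euc d → ℝ :=
    fun x y => bdist D (π x) (π y) + max (hfun D x) (hfun D y) with hr
  have rpos : ∀ x ∈ D, ∀ y, 0 < r x y := fun x hx y =>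
    add_pos_of_nonneg_of_pos (bdist_nonneg _ _ _) (lt_max_of_lt_left (hpos x hx))
  have rcomm : ∀ x y, r x y = r y x := fun x y => by
    simp only [hr, bdist_comm D (π x), max_comm (hfun D x)]
  have rtri : ∀ x ∈ D, ∀ y ∈ D, ∀ z ∈ D, r x z ≤ r x y + r y z := by
    intro x hx y hy z hz
    have hb := bdist_triangle (exists_joins_frontier hD hfc (hπ x hx).1 (hπ y hy).1)
      (exists_joins_frontier hD hfc (hπ y hy).1 (hπ z hz).1)
    have hm : max (hfun D x) (hfun D z) ≤
        max (hfun D x) (hfun D y) + max (hfun D y) (hfun D z) :=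
      max_le
        ((le_max_left _ _).trans (le_add_of_nonneg_right ((hpos y hy).le.trans (le_max_left _ _))))
        ((le_max_right _ _).trans (le_add_of_nonneg_left ((hpos y hy).le.trans (le_max_right _ _))))
    simp only [hr]
    linarith
  have hdH : ∀ x ∈ D, ∀ y ∈ D, dH D π x y =
      2 * Real.log (r x y) - Real.log (hfun D x) - Real.log (hfun D y) := by
    intro x hx y hy
    have hx' := hpos x hx
    have hy' := hpos y hy
    have hxy := mul_pos hx' hy'
    unfold dH
    rw [Real.log_div (rpos x hx y).ne' (Real.sqrt_pos.2 hxy).ne', Real.log_sqrt hxy.le,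
      Real.log_mul hx'.ne' hy'.ne']
    ring
  have hlog : ∀ a b c e : ℝ, 0 < a → 0 < b → 0 < c → 0 < e → a * b ≤ 4 * (c * e) →
      Real.log a + Real.log b ≤ 2 * Real.log 2 + (Real.log c + Real.log e) := by
    intro a b c e ha hb hc he h
    have h' := Real.log_le_log (mul_pos ha hb) h
    rw [Real.log_mul ha.ne' hb.ne', Real.log_mul (by norm_num) (mul_pos hc he).ne',
      Real.log_mul hc.ne' he.ne', show (4 : ℝ) = 2 ^ 2 by norm_num, Real.log_pow] at h'
    exact_mod_cast h'
  rw [hdH _ h₁ _ h₂, hdH _ h₃ _ h₄, hdH _ h₁ _ h₃, hdH _ h₂ _ h₄, hdH _ h₁ _ h₄, hdH _ h₂ _ h₃,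
    ← sub_le_iff_le_add, le_max_iff]
  refine (mul_le_four_mul_max (rpos x₁ h₁ x₂) (rpos x₃ h₃ x₄)
    (r₁₃ := r x₁ x₃) (r₂₃ := r x₂ x₃) (r₁₄ := r x₁ x₄) (r₂₄ := r x₂ x₄) ?_ ?_ ?_ ?_).imp
    (fun h => ?_) (fun h => ?_)
  · rw [rcomm x₂ x₃]; exact rtri _ h₁ _ h₃ _ h₂
  · rw [rcomm x₂ x₄]; exact rtri _ h₁ _ h₄ _ h₂
  · rw [rcomm x₁ x₃]; exact rtri _ h₃ _ h₁ _ h₄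
  · rw [rcomm x₂ x₃]; exact rtri _ h₃ _ h₂ _ h₄
  · linarith [hlog _ _ _ _ (rpos x₁ h₁ x₂) (rpos x₃ h₃ x₄) (rpos x₁ h₁ x₃) (rpos x₂ h₂ x₄) h]
  · linarith [hlog _ _ _ _ (rpos x₁ h₁ x₂) (rpos x₃ h₃ x₄) (rpos x₁ h₁ x₄) (rpos x₂ h₂ x₃) h]
end
end
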